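/- The Littlewood-Richardson coefficient c^ν_{λμ} equals the number of pairs of column strict tableaux (S,T) where S has straight shape λ, T has straight shape μ, and the concatenated reading word read(S)read(T) is a lattice word of content ν. -/

import Mathlib

open scoped BigOperators
noncomputable section

/-- The ring of symmetric functions, presented as `ℚ[p₁, p₂, p₃, …]`,
with the variable `X k` representing the power sum `p_k` (the variable `X 0` is unused). -/
abbrev SymFn := MvPolynomial ℕ ℚ

/-- The power sum symmetric function `p_k`. -/
def pGen (k : ℕ) : SymFn := MvPolynomial.X k

/-- `p_λ` for a multiset of parts. -/
def pMul (m : Multiset ℕ) : SymFn := (m.map pGen).prod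

/-- `p_λ` for a partition `λ`. -/
def pPart {n : ℕ} (lam : n.Partition) : SymFn := pMul lam.parts

/-- `z_λ = ∏_i i^{m_i(λ)} m_i(λ)!`. -/
def zed {n : ℕ} (lam : n.Partition) : ℚ :=
  ∏ i ∈ Finset.range (n + 1),
    (i : ℚ) ^ (lam.parts.count i) * (Nat.factorial (lam.parts.count i))

/-- `z` of a monomial in the `p`-generators. -/
def zMon (m : ℕ →₀ ℕ) : ℚ :=
  ∏ i ∈ m.support, (i : ℚ) ^ (m i) * (Nat.factorial (m i))

/-- The Hall scalar product, determined by `⟨p_λ, p_μ⟩ = z_λ δ_{λμ}`. -/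
def hall (f g : SymFn) : ℚ :=
  ∑ m ∈ f.support, MvPolynomial.coeff m f * MvPolynomial.coeff m g * zMon m

/-- The complete homogeneous symmetric function `h_m = ∑_{λ ⊢ m} p_λ / z_λ`. -/
def hFn (m : ℕ) : SymFn := ∑ lam : m.Partition, (zed lam)⁻¹ • pPart lam

/-- `h_k` for an integer index, vanishing for negative `k`. -/
def hInt (k : ℤ) : SymFn := if 0 ≤ k then hFn k.toNat else 0

/-- The Schur function of a (finite, weakly decreasing) list of row lengths,
via the Jacobi–Trudi determinant `s_λ = det(h_{λ_i - i + j})`. -/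
def schurList (l : List ℕ) : SymFn :=
  Matrix.det (Matrix.of fun i j : Fin l.length =>
    hInt ((l.get i : ℤ) - (i : ℤ) + (j : ℤ)))

/-- The parts of a partition, sorted in weakly decreasing order. -/
def partList {n : ℕ} (lam : n.Partition) : List ℕ := (lam.parts.sort (· ≤ ·)).reverse

/-- The Schur function `s_λ`. -/
def schur {n : ℕ} (lam : n.Partition) : SymFn := schurList (partList lam)

/-- Evaluation `f(Ξ_ν)` of a symmetric function at the eigenvalues of a permutation
matrix of cycle type `ν`: the power sum `p_k` evaluates to `∑_{j ∈ ν, j ∣ k} j`. -/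
def xiEval {n : ℕ} (nu : n.Partition) (f : SymFn) : ℚ :=
  MvPolynomial.eval (fun k => ((nu.parts.filter (fun j => j ∣ k)).sum : ℚ)) f

/-- The character scalar product `⟨f, g⟩_@ = ∑_{ν ⊢ n} f(Ξ_ν) g(Ξ_ν) / z_ν`. -/
def atProd (n : ℕ) (f g : SymFn) : ℚ :=
  ∑ nu : n.Partition, xiEval nu f * xiEval nu g / zed nu

/-- The Frobenius-type map `φ_n(f) = ∑_{ν ⊢ n} f(Ξ_ν) p_ν / z_ν`. -/
def phi (n : ℕ) (f : SymFn) : SymFn :=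
  ∑ nu : n.Partition, (xiEval nu f / zed nu) • pPart nu

/-- The Kronecker (internal) product, determined by
`(p_λ/z_λ) ∗ (p_μ/z_μ) = δ_{λμ} p_λ/z_λ`. -/
def kron (f g : SymFn) : SymFn :=
  ∑ m ∈ f.support,
    MvPolynomial.monomial m (MvPolynomial.coeff m f * MvPolynomial.coeff m g * zMon m)

end


open scoped BigOperators
noncomputable section

/-- A (possibly skew) tableau, in French notation: `rows 0` is the bottom row.
`inn i` is the number of cells of the inner shape in row `i`, and `rows i`
lists the entries of row `i` from left to right. -/
structure SkewTab where
  inn : List ℕ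
  rows : List (List ℕ)

namespace SkewTab

/-- Inner shape of row `i`. -/
def innFn (T : SkewTab) (i : ℕ) : ℕ := T.inn.getD i 0

/-- Outer shape of row `i`. -/
def outFn (T : SkewTab) (i : ℕ) : ℕ := T.innFn i + (T.rows.getD i []).length

/-- The entry in row `i`, column `j` (for cells of the skew shape). -/
def entry (T : SkewTab) (i j : ℕ) : ℕ := (T.rows.getD i []).getD (j - T.innFn i) 0

/-- Column strict (skew) tableau: rows weakly increase left to right, columns
strictly increase bottom to top, entries are positive integers. -/
def IsSkewCST (T : SkewTab) : Prop :=
  T.inn.length = T.rows.length ∧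
  (∀ i, T.innFn (i + 1) ≤ T.innFn i) ∧
  (∀ i, T.outFn (i + 1) ≤ T.outFn i) ∧
  (T.rows ≠ [] → T.outFn (T.rows.length - 1) ≠ 0) ∧
  (∀ r ∈ T.rows, r.Chain' (· ≤ ·)) ∧
  (∀ r ∈ T.rows, ∀ x ∈ r, 0 < x) ∧
  (∀ i j, T.innFn (i + 1) ≤ j → j < T.outFn (i + 1) → T.innFn i ≤ j →
    T.entry i j < T.entry (i + 1) j)

/-- A column strict tableau of straight shape. -/
def IsCST (T : SkewTab) : Prop :=
  T.IsSkewCST ∧ T.inn = List.replicate T.rows.length 0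

/-- The (outer) shape of a straight-shape tableau, as the list of row lengths. -/
def shape (T : SkewTab) : List ℕ := T.rows.map List.length

/-- The reading word: rows are read bottom to top, each row right to left. -/
def read (T : SkewTab) : List ℕ := (T.rows.map List.reverse).flatten

/-- The number of occurrences of the letter `x` among the entries of `T`. -/
def contentCount (T : SkewTab) (x : ℕ) : ℕ := T.rows.flatten.count x

end SkewTab

/-- A word `w` (in the alphabet of positive integers) is lattice if every prefix
contains at least as many `i`'s as `(i+1)`'s, for every `i ≥ 1`. -/
def IsLatticeWord (w : List ℕ) : Prop :=
  ∀ p i, 1 ≤ i → (w.take p).count (i + 1) ≤ (w.take p).count i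

/-- A word has content `ν` (i.e. `{{1^{ν_1}, 2^{ν_2}, …}}`) if the letter `i+1`
occurs exactly `ν_{i+1}` times, where `ν` is given as a weakly decreasing list. -/
def HasContent (w : List ℕ) (l : List ℕ) : Prop :=
  ∀ i, w.count (i + 1) = l.getD i 0

/-- One elementary Knuth transformation. -/
inductive KnuthStep : List ℕ → List ℕ → Prop
  | k1 (u v : List ℕ) {x y z : ℕ} (h1 : x ≤ y) (h2 : y < z) :
      KnuthStep (u ++ x :: z :: y :: v) (u ++ z :: x :: y :: v)
  | k2 (u v : List ℕ) {x y z : ℕ} (h1 : x < y) (h2 : y ≤ z) :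
      KnuthStep (u ++ y :: x :: z :: v) (u ++ y :: z :: x :: v)

/-- Knuth (plactic) equivalence of words; two skew tableaux are jeu de taquin
equivalent exactly when their reading words are Knuth equivalent. -/
def KnuthEquiv : List ℕ → List ℕ → Prop := Relation.EqvGen KnuthStep

end

/-!
By the dual Pieri rule, the adjoint of multiplication by `h_m` with respect to the Hall scalar
product removes horizontal strips of size `m` from `s_ν`. Expanding `s_λ` and `s_μ` by
Jacobi–Trudi therefore writes `⟨s_λ s_μ, s_ν⟩` as a signed sum over the chains of horizontal
strips from `∅` to `ν`. Putting a letter `k` into row `i` for each cell that the `i`-th strip has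
in row `k` of `ν` turns such a chain into a pair of fillings with weakly increasing rows. The strip
condition then says that the concatenated reading word is a lattice word of content `ν`.

The sign of a chain is governed by the vector of its strip sizes and changes under the dot action
of a simple transposition on this vector. If some tableau column is not strict, take the smallest
letter at which this happens and the largest row for this letter. A Bender–Knuth reflection beyond
this letter realises the dot action of the transposition of this row and the next one, and it does
not disturb the chosen violation. So the chains with a violation cancel, and the remaining ones
contribute only when their strip sizes are the row lengths `λ`, `μ`, with sign `1`.
-/

section HallForm

open MvPolynomial

theorem zMon_add_single (d : ℕ →₀ ℕ) (k : ℕ) :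
    zMon (d + Finsupp.single k 1) = k * (d k + 1) * zMon d := by
  have zMon_eq (e : ℕ →₀ ℕ) : zMon e = (k : ℚ) ^ e k * (e k).factorial * zMon (e.erase k) :=
    (Finsupp.mul_prod_erase' e k (fun i a => (i : ℚ) ^ a * a.factorial) (by simp)).symm
  have erase_eq : (d + Finsupp.single k 1).erase k = d.erase k := by
    rw [Finsupp.erase_add, Finsupp.erase_single, add_zero]
  rw [zMon_eq (d + _), zMon_eq d, erase_eq, Finsupp.add_apply, Finsupp.single_eq_same,
    Nat.factorial_succ, pow_succ]
  push_cast
  ring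

theorem zMon_eq_zero {d : ℕ →₀ ℕ} (h : d 0 ≠ 0) : zMon d = 0 :=
  Finset.prod_eq_zero (Finsupp.mem_support_iff.mpr h) (by simp [h])

theorem zed_eq_zMon {n : ℕ} (lam : n.Partition) :
    zed lam = zMon (Multiset.toFinsupp lam.parts) := by
  have support_subset : (Multiset.toFinsupp lam.parts).support ⊆ Finset.range (n + 1) := by
    intro i hi
    have hi : i ∈ lam.parts := by simpa using hi
    exact Finset.mem_range_succ_iff.mpr (lam.le_of_mem_parts hi)
  exact (Finsupp.prod_of_support_subset _ support_subset
    (fun i a => (i : ℚ) ^ a * a.factorial) (by simp)).symm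

theorem hall_eq_sum {f : SymFn} (g : SymFn) {s : Finset (ℕ →₀ ℕ)} (hs : f.support ⊆ s) :
    hall f g = ∑ m ∈ s, coeff m f * coeff m g * zMon m := by
  refine Finset.sum_subset hs fun i _ hi => ?_
  rw [notMem_support_iff.mp hi, zero_mul, zero_mul]

/-- The Hall scalar product `hall` as a bilinear form. -/
noncomputable def hallForm : LinearMap.BilinForm ℚ SymFn :=
  LinearMap.mk₂ ℚ hall
    (fun f f' g => by
      rw [hall_eq_sum g support_add, hall_eq_sum g Finset.subset_union_left,
        hall_eq_sum g Finset.subset_union_right, ← Finset.sum_add_distrib]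
      exact Finset.sum_congr rfl fun m _ => by rw [coeff_add]; ring)
    (fun c f g => by
      rw [hall_eq_sum g support_smul, hall, Finset.smul_sum]
      exact Finset.sum_congr rfl fun m _ => by simp only [coeff_smul, smul_eq_mul]; ring)
    (fun f g g' => by
      simp only [hall, ← Finset.sum_add_distrib]
      exact Finset.sum_congr rfl fun m _ => by rw [coeff_add]; ring)
    (fun c f g => by
      simp only [hall, Finset.smul_sum]
      exact Finset.sum_congr rfl fun m _ => by simp only [coeff_smul, smul_eq_mul]; ring)

theorem hallForm_apply (f g : SymFn) : hallForm f g = hall f g := rfl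

theorem hallForm_monomial (d : ℕ →₀ ℕ) (a : ℚ) (g : SymFn) :
    hallForm (monomial d a) g = a * coeff d g * zMon d := by
  rw [hallForm_apply, hall_eq_sum g support_monomial_subset, Finset.sum_singleton, coeff_monomial,
    if_pos rfl]

theorem hallForm_one (g : SymFn) : hallForm 1 g = constantCoeff g := by
  rw [one_def, hallForm_monomial, zMon, Finsupp.support_zero, Finset.prod_empty, one_mul, mul_one,
    constantCoeff_eq]

theorem hallForm_X_mul (k : ℕ) (f g : SymFn) :
    hallForm (X k * f) g = k * hallForm f (pderiv k g) := by
  induction f using MvPolynomial.induction_on' with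
  | monomial d a =>
    rw [X, monomial_mul, add_comm, hallForm_monomial, hallForm_monomial, zMon_add_single,
      coeff_pderiv]
    ring
  | add f f' hf hf' =>
    rw [mul_add, map_add, map_add, LinearMap.add_apply, LinearMap.add_apply, hf, hf', mul_add]

end HallForm

section CompleteHomogeneous

open MvPolynomial

theorem pMul_eq_monomial (s : Multiset ℕ) : pMul s = monomial (Multiset.toFinsupp s) 1 := by
  induction s using Multiset.induction_on with
  | empty => simp [pMul]
  | cons a s ih =>
    have pMul_cons : pMul (a ::ₘ s) = X a * pMul s := by simp [pMul, pGen]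
    rw [pMul_cons, ih, X, monomial_mul, ← Multiset.singleton_add, map_add,
      Multiset.toFinsupp_singleton, one_mul]

theorem weight_id_toFinsupp (s : Multiset ℕ) :
    Finsupp.weight (id : ℕ → ℕ) (Multiset.toFinsupp s) = s.sum := by
  induction s using Multiset.induction_on with
  | empty => simp
  | cons a s ih =>
    rw [← Multiset.singleton_add, map_add, map_add, ih, Multiset.toFinsupp_singleton,
      Finsupp.weight_single, Multiset.sum_add, Multiset.sum_singleton, one_smul, id]

theorem exists_partition_toFinsupp_parts_eq {d : ℕ →₀ ℕ} (hd : d 0 = 0) :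
    ∃ lam : (Finsupp.weight (id : ℕ → ℕ) d).Partition, Multiset.toFinsupp lam.parts = d := by
  refine ⟨⟨Finsupp.toMultiset d, fun {i} hi => ?_, ?_⟩, Finsupp.toMultiset_toFinsupp d⟩
  · rw [Finsupp.mem_toMultiset, Finsupp.mem_support_iff] at hi
    exact Nat.pos_of_ne_zero fun h => hi (h ▸ hd)
  · rw [← weight_id_toFinsupp, Finsupp.toMultiset_toFinsupp]

theorem coeff_hFn (m : ℕ) (d : ℕ →₀ ℕ) :
    coeff d (hFn m) = if Finsupp.weight id d = m then (zMon d)⁻¹ else 0 := by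
  have coeff_eq_sum : coeff d (hFn m) = ∑ lam : m.Partition,
      if Multiset.toFinsupp lam.parts = d then (zMon d)⁻¹ else 0 := by
    rw [hFn, coeff_sum]
    refine Finset.sum_congr rfl fun lam _ => ?_
    rw [coeff_smul, pPart, pMul_eq_monomial, coeff_monomial, zed_eq_zMon]
    split_ifs with h <;> simp [h]
  rw [coeff_eq_sum]
  split_ifs with hd
  · by_cases h0 : d 0 = 0
    · subst hd
      obtain ⟨lam, hlam⟩ := exists_partition_toFinsupp_parts_eq h0
      rw [Finset.sum_eq_single_of_mem lam (Finset.mem_univ _), if_pos hlam]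
      intro lam' _ hne
      refine if_neg fun h => hne (Nat.Partition.ext ?_)
      exact Multiset.toFinsupp.injective (h.trans hlam.symm)
    · simp [zMon_eq_zero h0]
  · refine Finset.sum_eq_zero fun lam _ => if_neg ?_
    rintro rfl
    exact hd (by rw [weight_id_toFinsupp, lam.parts_sum])

theorem coeff_hInt (z : ℤ) (d : ℕ →₀ ℕ) :
    coeff d (hInt z) = if ((Finsupp.weight id d : ℕ) : ℤ) = z then (zMon d)⁻¹ else 0 := by
  unfold hInt
  split_ifs with hz hd hd
  · rw [coeff_hFn, if_pos (by omega)]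
  · rw [coeff_hFn, if_neg (by omega)]
  · omega
  · exact coeff_zero d

theorem hInt_zero : hInt 0 = 1 := by
  simp [hInt, hFn, zed, pPart, pMul]

theorem hInt_of_neg {z : ℤ} (hz : z < 0) : hInt z = 0 :=
  if_neg hz.not_ge

theorem constantCoeff_hInt (z : ℤ) : constantCoeff (hInt z) = if z = 0 then 1 else 0 := by
  rw [constantCoeff_eq, coeff_hInt, map_zero, zMon, Finsupp.support_zero, Finset.prod_empty,
    inv_one, Nat.cast_zero]
  exact if_congr eq_comm rfl rfl

theorem smul_pderiv_hInt {k : ℕ} (hk : k ≠ 0) (z : ℤ) :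
    (k : ℚ) • pderiv k (hInt z) = hInt (z - k) := by
  ext d
  rw [coeff_smul, coeff_pderiv, coeff_hInt, coeff_hInt, map_add, Finsupp.weight_single,
    zMon_add_single, one_smul, id, Nat.cast_add]
  by_cases hd : ((Finsupp.weight id d : ℕ) : ℤ) + k = z
  · rw [if_pos hd, if_pos (by omega), smul_eq_mul, mul_inv]
    field_simp
  · rw [if_neg hd, if_neg (by omega), zero_mul, smul_zero]

theorem coeff_X_mul_hInt {k : ℕ} (hk : k ≠ 0) (z : ℤ) (d : ℕ →₀ ℕ) :
    coeff d (X k * hInt (z - k))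
      = if ((Finsupp.weight id d : ℕ) : ℤ) = z then (k * d k : ℕ) * (zMon d)⁻¹ else 0 := by
  by_cases hkd : k ∈ d.support
  · obtain ⟨e, rfl⟩ : ∃ e, d = Finsupp.single k 1 + e :=
      exists_add_of_le (Finsupp.single_le_iff.mpr
        (Nat.one_le_iff_ne_zero.mpr (Finsupp.mem_support_iff.mp hkd)))
    rw [coeff_X_mul', if_pos hkd, add_tsub_cancel_left, coeff_hInt, map_add, Finsupp.weight_single,
      one_smul, id, Nat.cast_add]
    by_cases he : (k : ℤ) + (Finsupp.weight id e : ℕ) = z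
    · rw [if_pos (by omega), if_pos he, add_comm, zMon_add_single, mul_inv, Finsupp.add_apply,
        Finsupp.single_eq_same]
      push_cast
      field_simp
    · rw [if_neg (by omega), if_neg he]
  · rw [coeff_X_mul', if_neg hkd, Finsupp.notMem_support_iff.mp hkd, mul_zero, Nat.cast_zero,
      zero_mul, ite_self]

theorem weight_id_eq_sum_Icc (d : ℕ →₀ ℕ) :
    Finsupp.weight id d = ∑ k ∈ Finset.Icc 1 (Finsupp.weight (id : ℕ → ℕ) d), k * d k := by
  have support_subset : d.support ⊆ Finset.range (Finsupp.weight (id : ℕ → ℕ) d + 1) := fun i hi =>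
    Finset.mem_range_succ_iff.mpr (Finsupp.le_weight_of_ne_zero' id (Finsupp.mem_support_iff.mp hi))
  conv_lhs => rw [Finsupp.weight_apply, Finsupp.sum_of_support_subset _ support_subset _ (by simp)]
  rw [Finset.sum_range_eq_add_Ico _ (Nat.succ_pos _), id, smul_zero, zero_add]
  exact Finset.sum_congr rfl fun k _ => mul_comm _ _

/-- Newton's identity `m h_m = ∑ₖ p_k h_{m-k}`. -/
theorem smul_hInt (m : ℕ) :
    (m : ℚ) • hInt m = ∑ k ∈ Finset.Icc 1 m, X k * hInt ((m : ℤ) - k) := by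
  ext d
  rw [coeff_smul, coeff_hInt, coeff_sum, Finset.sum_congr rfl fun k hk =>
    coeff_X_mul_hInt (Nat.one_le_iff_ne_zero.mp (Finset.mem_Icc.mp hk).1) m d]
  split_ifs with hd
  · rw [← Finset.sum_mul, ← Nat.cast_sum, ← Nat.cast_inj.mp hd, ← weight_id_eq_sum_Icc, smul_eq_mul]
  · rw [smul_zero, Finset.sum_const_zero]

end CompleteHomogeneous

section Adjoint

open MvPolynomial Finset

theorem smul_pderiv_prod_hInt {ι : Type*} [DecidableEq ι] {k : ℕ} (hk : k ≠ 0) (s : Finset ι)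
    (β : ι → ℤ) :
    (k : ℚ) • pderiv k (∏ i ∈ s, hInt (β i))
      = ∑ j ∈ s, ∏ i ∈ s, hInt (β i - (Pi.single j k : ι → ℕ) i) := by
  induction s using Finset.induction_on with
  | empty => simp
  | insert a s ha ih =>
    have prod_sub_single :
        ∏ i ∈ s, hInt (β i - (Pi.single a k : ι → ℕ) i) = ∏ i ∈ s, hInt (β i) :=
      Finset.prod_congr rfl fun i hi => by
        rw [Pi.single_eq_of_ne (ne_of_mem_of_not_mem hi ha), Nat.cast_zero, sub_zero]
    rw [Finset.prod_insert ha, pderiv_mul, smul_add, ← smul_mul_assoc, smul_pderiv_hInt hk,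
      ← mul_smul_comm, ih, Finset.sum_insert ha, Finset.prod_insert ha, prod_sub_single,
      Pi.single_eq_same, Finset.mul_sum]
    refine congrArg _ (Finset.sum_congr rfl fun j hj => ?_)
    rw [Finset.prod_insert ha, Pi.single_eq_of_ne (ne_of_mem_of_not_mem hj ha).symm, Nat.cast_zero,
      sub_zero]

theorem map_addRightEmbedding_piAntidiag {ι : Type*} [DecidableEq ι] {s : Finset ι} {j : ι}
    (hj : j ∈ s) {k m : ℕ} (hk : k ≤ m) :
    (piAntidiag s (m - k)).map (addRightEmbedding (Pi.single j k))
      = {γ ∈ piAntidiag s m | k ≤ γ j} := by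
  ext γ
  simp only [mem_map, mem_piAntidiag, addRightEmbedding_apply, mem_filter]
  constructor
  · rintro ⟨γ, ⟨hsum, hsupp⟩, rfl⟩
    refine ⟨⟨?_, fun i hi => ?_⟩, by simp⟩
    · simp only [Pi.add_apply, Finset.sum_add_distrib, hsum, Finset.sum_pi_single', hj, if_true]
      omega
    · by_contra his
      rw [Pi.add_apply, Pi.single_eq_of_ne (ne_of_mem_of_not_mem hj his).symm, add_zero] at hi
      exact his (hsupp i hi)
  · rintro ⟨⟨hsum, hsupp⟩, hkj⟩
    have hle : Pi.single j k ≤ γ := fun i => by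
      rcases eq_or_ne i j with rfl | hij
      · rwa [Pi.single_eq_same]
      · rw [Pi.single_eq_of_ne hij]
        exact Nat.zero_le _
    refine ⟨γ - Pi.single j k, ⟨?_, fun i hi => hsupp i ?_⟩, tsub_add_cancel_of_le hle⟩
    · simp only [Pi.sub_apply]
      rw [Finset.sum_tsub_distrib _ fun i _ => hle i, hsum, Finset.sum_pi_single', if_pos hj]
    · rw [Pi.sub_apply] at hi
      omega

theorem sum_Icc_sum_piAntidiag_add_single {ι M : Type*} [DecidableEq ι] [AddCommMonoid M]
    {s : Finset ι} {j : ι} (hj : j ∈ s) (m : ℕ) (F : (ι → ℕ) → M) :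
    ∑ k ∈ Icc 1 m, ∑ γ ∈ piAntidiag s (m - k), F (γ + Pi.single j k)
      = ∑ γ ∈ piAntidiag s m, γ j • F γ := by
  calc ∑ k ∈ Icc 1 m, ∑ γ ∈ piAntidiag s (m - k), F (γ + Pi.single j k)
      = ∑ k ∈ Icc 1 m, ∑ γ ∈ piAntidiag s m with k ≤ γ j, F γ :=
        Finset.sum_congr rfl fun k hk => by
          rw [← map_addRightEmbedding_piAntidiag hj (mem_Icc.mp hk).2, Finset.sum_map]
          rfl
    _ = ∑ γ ∈ piAntidiag s m, ∑ k ∈ Icc 1 m with k ≤ γ j, F γ :=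
        Finset.sum_comm' fun k γ => by simp only [mem_filter]; tauto
    _ = ∑ γ ∈ piAntidiag s m, γ j • F γ := Finset.sum_congr rfl fun γ hγ => by
        have hle : γ j ≤ m :=
          (mem_piAntidiag.mp hγ).1 ▸ Finset.single_le_sum_of_canonicallyOrdered hj
        have hIcc : {k ∈ Icc 1 m | k ≤ γ j} = Icc 1 (γ j) := by
          ext k
          simp only [mem_filter, mem_Icc]
          omega
        rw [hIcc, Finset.sum_const, Nat.card_Icc, Nat.add_sub_cancel]

theorem smul_hallForm_hInt_mul_prod_hInt {ι : Type*} [DecidableEq ι] (s : Finset ι) (m : ℕ)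
    (f : SymFn) (β : ι → ℤ) :
    (m : ℚ) • hallForm (hInt m * f) (∏ i ∈ s, hInt (β i))
      = ∑ k ∈ Icc 1 m, ∑ j ∈ s, hallForm (hInt ((m - k : ℕ) : ℤ) * f)
          (∏ i ∈ s, hInt (β i - (Pi.single j k : ι → ℕ) i)) := by
  rw [← LinearMap.smul_apply, ← map_smul, ← smul_mul_assoc, smul_hInt, Finset.sum_mul, map_sum,
    LinearMap.sum_apply]
  refine Finset.sum_congr rfl fun k hk => ?_
  obtain ⟨hk1, hkm⟩ := mem_Icc.mp hk
  rw [mul_assoc, hallForm_X_mul, ← smul_eq_mul, ← map_smul,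
    smul_pderiv_prod_hInt (Nat.one_le_iff_ne_zero.mp hk1), map_sum, Nat.cast_sub hkm]

/-- The adjoint of multiplication by `h_m` acts on products of complete homogeneous functions by
distributing the loss `m` of degree over the factors in all possible ways. -/
theorem hallForm_hInt_mul_prod_hInt {ι : Type*} [DecidableEq ι] (s : Finset ι) (m : ℕ)
    (f : SymFn) (β : ι → ℤ) :
    hallForm (hInt m * f) (∏ i ∈ s, hInt (β i))
      = ∑ γ ∈ piAntidiag s m, hallForm f (∏ i ∈ s, hInt (β i - γ i)) := by
  induction m using Nat.strong_induction_on generalizing β with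
  | _ m ih =>
    rcases Nat.eq_zero_or_pos m with rfl | hm
    · simp [hInt_zero]
    refine smul_right_injective ℚ (Nat.cast_ne_zero (R := ℚ).mpr hm.ne') ?_
    beta_reduce
    calc (m : ℚ) • hallForm (hInt m * f) (∏ i ∈ s, hInt (β i))
        = ∑ k ∈ Icc 1 m, ∑ j ∈ s, ∑ γ ∈ piAntidiag s (m - k),
            hallForm f (∏ i ∈ s, hInt (β i - ((γ + Pi.single j k : ι → ℕ) i))) := by
          rw [smul_hallForm_hInt_mul_prod_hInt]
          refine Finset.sum_congr rfl fun k hk => Finset.sum_congr rfl fun j _ => ?_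
          obtain ⟨hk1, hkm⟩ := mem_Icc.mp hk
          rw [ih (m - k) (by omega)]
          simp only [Pi.add_apply, Nat.cast_add, sub_sub, add_comm]
      _ = ∑ j ∈ s, ∑ γ ∈ piAntidiag s m,
            γ j • hallForm f (∏ i ∈ s, hInt (β i - γ i)) := by
          rw [Finset.sum_comm]
          exact Finset.sum_congr rfl fun j hj => sum_Icc_sum_piAntidiag_add_single hj m
            fun γ => hallForm f (∏ i ∈ s, hInt (β i - γ i))
      _ = (m : ℚ) • ∑ γ ∈ piAntidiag s m, hallForm f (∏ i ∈ s, hInt (β i - γ i)) := by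
          rw [Finset.sum_comm, Finset.smul_sum]
          refine Finset.sum_congr rfl fun γ hγ => ?_
          rw [← Finset.sum_smul, (mem_piAntidiag.mp hγ).1, Nat.cast_smul_eq_nsmul]

end Adjoint

section SignReversing

/-- A sign-reversing involution `t (J a)` that is chosen according to the least element `J a` of a
set `V a` of features of `a` cancels a sum, as soon as toggling preserves this least feature. -/
theorem sum_eq_zero_of_isLeast_toggle {ι α M : Type*} [LinearOrder ι] [WellFoundedLT ι]
    [AddCommGroup M] [IsAddTorsionFree M] (s : Finset α) (f : α → M) (V : α → Set ι)
    (t : ι → α → α) (hV : ∀ a ∈ s, (V a).Nonempty)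
    (ht : ∀ a ∈ s, ∀ j, IsLeast (V a) j →
      t j a ∈ s ∧ IsLeast (V (t j a)) j ∧ t j (t j a) = a ∧ f (t j a) = -f a) :
    ∑ a ∈ s, f a = 0 := by
  classical
  have exists_isLeast (a : α) (ha : a ∈ s) : ∃ j, IsLeast (V a) j :=
    ⟨wellFounded_lt.min (V a) (hV a ha), wellFounded_lt.min_mem _ _, fun _ => wellFounded_lt.min_le⟩
  choose J hJ using exists_isLeast
  refine Finset.sum_involution (fun a ha => t (J a ha) a) (fun a ha => ?_) (fun a ha hne hfix => ?_)
    (fun a ha => (ht a ha _ (hJ a ha)).1) fun a ha => ?_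
  · rw [(ht a ha _ (hJ a ha)).2.2.2, add_neg_cancel]
  · have hneg := (ht a ha _ (hJ a ha)).2.2.2
    rw [hfix] at hneg
    exact hne (self_eq_neg.mp hneg)
  · obtain ⟨hmem, hleast, hinv, -⟩ := ht a ha _ (hJ a ha)
    rw [(hJ _ hmem).unique hleast, hinv]

end SignReversing

section DotSwap

/-- The dot action `κ ↦ s_j(κ + ρ) - ρ` of the simple transposition `s_j = (j j+1)`, where
`ρ = (0, -1, -2, …)`. -/
def dotSwap (j : ℕ) (κ : ℕ → ℤ) : ℕ → ℤ :=
  fun i => κ (Equiv.swap j (j + 1) i) - (Equiv.swap j (j + 1) i : ℕ) + i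

theorem dotSwap_apply_left (j : ℕ) (κ : ℕ → ℤ) : dotSwap j κ j = κ (j + 1) - 1 := by
  rw [dotSwap, Equiv.swap_apply_left]
  push_cast
  ring

theorem dotSwap_apply_right (j : ℕ) (κ : ℕ → ℤ) : dotSwap j κ (j + 1) = κ j + 1 := by
  rw [dotSwap, Equiv.swap_apply_right]
  push_cast
  ring

theorem dotSwap_apply_of_ne {i j : ℕ} (hj : i ≠ j) (hj' : i ≠ j + 1) (κ : ℕ → ℤ) :
    dotSwap j κ i = κ i := by
  rw [dotSwap, Equiv.swap_apply_of_ne_of_ne hj hj', sub_add_cancel]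

theorem dotSwap_dotSwap (j : ℕ) (κ : ℕ → ℤ) : dotSwap j (dotSwap j κ) = κ := by
  funext i
  simp [dotSwap]

theorem sum_range_dotSwap {j N : ℕ} (hj : j + 1 < N) (κ : ℕ → ℤ) :
    ∑ i ∈ Finset.range N, dotSwap j κ i = ∑ i ∈ Finset.range N, κ i := by
  have hsupp : {i | Equiv.swap j (j + 1) i ≠ i} ⊆ Finset.range N := by
    intro i hi
    rcases Equiv.swap_apply_ne_self_iff.mp hi with ⟨-, rfl | rfl⟩ <;> simp <;> omega
  simp only [dotSwap, Finset.sum_add_distrib]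
  rw [Equiv.Perm.sum_comp _ _ (fun i : ℕ => κ i - i) hsupp, ← Finset.sum_add_distrib]
  simp

theorem det_dotSwap {R : Type*} [CommRing R] {j N : ℕ} (hj : j + 1 < N) (κ : ℕ → ℤ)
    (F : ℤ → Fin N → R) :
    (Matrix.of fun i c : Fin N => F (dotSwap j κ i - i) c).det
      = -(Matrix.of fun i c : Fin N => F (κ i - i) c).det := by
  set σ : Equiv.Perm (Fin N) := Equiv.swap ⟨j, by omega⟩ ⟨j + 1, hj⟩
  have sign_σ : Equiv.Perm.sign σ = -1 := Equiv.Perm.sign_swap (by simp)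
  have val_σ (i : Fin N) : (σ i : ℕ) = Equiv.swap j (j + 1) i :=
    (Fin.val_injective.swap_apply _ _ i).symm
  rw [← neg_one_mul, ← Int.cast_one, ← Int.cast_neg, ← Units.val_one, ← Units.val_neg, ← sign_σ,
    ← Matrix.det_permute]
  congr 1
  ext i c
  simp [dotSwap, val_σ]

end DotSwap

section JacobiTrudi

open Finset

/-- The Jacobi–Trudi determinant `det (h_{κ_i - i + j})` of size `N` for an arbitrary integer
vector `κ`, indexed from `0`; it equals `s_κ` when `κ` is a partition with at most `N` parts. -/
noncomputable def jtDet (N : ℕ) (κ : ℕ → ℤ) : SymFn :=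
  Matrix.det (Matrix.of fun i j : Fin N => hInt (κ i - i + j))

/-- The entries of a list as an integer vector, extended by zeros. -/
def entrySeq (l : List ℕ) (i : ℕ) : ℤ := l.getD i 0

theorem schurList_eq_jtDet (l : List ℕ) : schurList l = jtDet l.length (entrySeq l) := by
  simp [schurList, jtDet, entrySeq]

theorem jtDet_eq_zero_of_neg {N : ℕ} {κ : ℕ → ℤ} (hκ : κ N < 0) : jtDet (N + 1) κ = 0 :=
  Matrix.det_eq_zero_of_row_eq_zero (Fin.last N) fun j => hInt_of_neg (by
    have := j.is_le
    simp only [Fin.val_last]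
    omega)

/-- The straightening rule `s_{(…,a,b,…)} = -s_{(…,b-1,a+1,…)}`. -/
theorem jtDet_dotSwap {j N : ℕ} (hj : j + 1 < N) (κ : ℕ → ℤ) :
    jtDet N (dotSwap j κ) = -jtDet N κ :=
  det_dotSwap hj κ fun z c => hInt (z + c)

theorem jtDet_eq_sum_rows (N : ℕ) (κ : ℕ → ℤ) :
    jtDet N κ = ∑ σ : Equiv.Perm (Fin N),
      (Equiv.Perm.sign σ : ℤ) • ∏ i : Fin N, hInt (κ i + ((σ i : ℤ) - i)) := by
  rw [jtDet, ← Matrix.det_transpose, Matrix.det_apply]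
  refine Finset.sum_congr rfl fun σ _ => ?_
  rw [Units.smul_def]
  refine congrArg _ (Finset.prod_congr rfl fun i _ => congrArg hInt ?_)
  ring

end JacobiTrudi

section Pieri

open Finset

theorem injective_sub_natCast {ι : Type*} (κ : ι → ℤ) :
    Function.Injective fun (γ : ι → ℕ) i => κ i - γ i :=
  fun _ _ h => funext fun i => Int.natCast_inj.mp (sub_right_injective (congrFun h i))

/-- The integer vectors obtained from `κ` by lowering its first `N` entries by `m` in total. -/
def lowerings (N m : ℕ) (κ : ℕ → ℤ) : Finset (ℕ → ℤ) :=
  (piAntidiag (range N) m).map ⟨_, injective_sub_natCast κ⟩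

theorem mem_lowerings {N m : ℕ} {κ κ' : ℕ → ℤ} :
    κ' ∈ lowerings N m κ ↔ (∀ i, κ' i ≤ κ i) ∧ (∀ i, N ≤ i → κ' i = κ i) ∧
      ∑ i ∈ range N, κ' i + m = ∑ i ∈ range N, κ i := by
  simp only [lowerings, mem_map, mem_piAntidiag, mem_range, Function.Embedding.coeFn_mk]
  constructor
  · rintro ⟨γ, ⟨rfl, hsupp⟩, rfl⟩
    refine ⟨fun i => by simp, fun i hi => ?_, by simp⟩
    have : γ i = 0 := by
      by_contra h
      exact hi.not_gt (hsupp i h)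
    simp [this]
  · rintro ⟨hle, heq, hsum⟩
    refine ⟨fun i => (κ i - κ' i).toNat, ⟨?_, fun i hi => ?_⟩, funext fun i => ?_⟩
    · zify
      simp [hle]
      omega
    · by_contra h
      simp [heq i (by omega)] at hi
    · rw [Int.toNat_of_nonneg (sub_nonneg.mpr (hle i)), sub_sub_cancel]

theorem hallForm_hInt_mul_prod_hInt_add (N m : ℕ) (f : SymFn) (κ : ℕ → ℤ) (c : Fin N → ℤ) :
    hallForm (hInt m * f) (∏ i : Fin N, hInt (κ i + c i))
      = ∑ κ' ∈ lowerings N m κ, hallForm f (∏ i : Fin N, hInt (κ' i + c i)) := by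
  have prod_eq (κ : ℕ → ℤ) : ∏ i : Fin N, hInt (κ i + c i)
      = ∏ i ∈ range N, hInt (κ i + if hi : i < N then c ⟨i, hi⟩ else 0) := by
    simp [Finset.prod_range]
  simp only [prod_eq, hallForm_hInt_mul_prod_hInt, lowerings, Finset.sum_map,
    Function.Embedding.coeFn_mk, sub_add_eq_add_sub]

theorem hallForm_hInt_mul_jtDet (N m : ℕ) (f : SymFn) (κ : ℕ → ℤ) :
    hallForm (hInt m * f) (jtDet N κ) = ∑ κ' ∈ lowerings N m κ, hallForm f (jtDet N κ') := by
  simp only [jtDet_eq_sum_rows, map_sum, map_zsmul, hallForm_hInt_mul_prod_hInt_add,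
    Finset.smul_sum]
  exact Finset.sum_comm

/-- The skew diagram `ν / κ` is a horizontal strip: it has at most one cell in each column. -/
def IsHorizontalStrip (κ ν : ℕ → ℤ) : Prop :=
  ∀ i, κ i ≤ ν i ∧ ν (i + 1) ≤ κ i

theorem dotSwap_mem_lowerings {N m j : ℕ} {κ ν : ℕ → ℤ} (hν : Antitone ν)
    (hκ : κ ∈ lowerings N m ν) (hjN : j + 1 < N) (hj : κ j < ν (j + 1)) :
    dotSwap j κ ∈ lowerings N m ν := by
  obtain ⟨hle, heq, hsum⟩ := mem_lowerings.mp hκ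
  refine mem_lowerings.mpr ⟨fun i => ?_, fun i hi => ?_, by rwa [sum_range_dotSwap hjN]⟩
  · rcases eq_or_ne i j with rfl | hij
    · rw [dotSwap_apply_left]
      linarith [hle (i + 1), hν i.le_succ]
    rcases eq_or_ne i (j + 1) with rfl | hij'
    · rw [dotSwap_apply_right]
      omega
    · rw [dotSwap_apply_of_ne hij hij']
      exact hle i
  · rw [dotSwap_apply_of_ne (by omega) (by omega), heq i hi]

theorem isLeast_dotSwap {j : ℕ} {κ ν : ℕ → ℤ} (hle : κ (j + 1) ≤ ν (j + 1))
    (hj : IsLeast {i | κ i < ν (i + 1)} j) :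
    IsLeast {i | dotSwap j κ i < ν (i + 1)} j := by
  refine ⟨?_, fun i hi => ?_⟩
  · rw [Set.mem_ofPred_eq, dotSwap_apply_left]
    omega
  · by_contra! hij
    rw [Set.mem_ofPred_eq, dotSwap_apply_of_ne hij.ne (by omega)] at hi
    exact hij.not_ge (hj.2 hi)

/-- The dual Pieri rule: `h_m^⊥ s_ν` is the sum of the `s_κ` over the horizontal strips `ν / κ` of
size `m`. The other lowerings `κ` of `ν` cancel in pairs, by straightening `κ` at the first place
where the strip condition fails. -/
theorem hallForm_hInt_mul_jtDet_of_antitone (N m : ℕ) (f : SymFn) {ν : ℕ → ℤ} (hν : Antitone ν)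
    (hνN : ∀ i, N ≤ i → ν i = 0) [DecidablePred (IsHorizontalStrip · ν)] :
    hallForm (hInt m * f) (jtDet N ν)
      = ∑ κ ∈ lowerings N m ν with IsHorizontalStrip κ ν, hallForm f (jtDet N κ) := by
  rw [hallForm_hInt_mul_jtDet, ← Finset.sum_filter_add_sum_filter_not _ (IsHorizontalStrip · ν),
    add_eq_left]
  refine sum_eq_zero_of_isLeast_toggle _ _ (fun κ => {i | κ i < ν (i + 1)})
    (fun j κ => if j + 1 < N then dotSwap j κ else κ) (fun κ hκ => ?_) fun κ hκ j hj => ?_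
  · obtain ⟨hmem, hnot⟩ := mem_filter.mp hκ
    by_contra hV
    exact hnot fun i => ⟨(mem_lowerings.mp hmem).1 i, not_lt.mp fun hi => hV ⟨i, hi⟩⟩
  have hmem := (mem_filter.mp hκ).1
  obtain ⟨hle, heq, -⟩ := mem_lowerings.mp hmem
  have hlt : κ j < ν (j + 1) := hj.1
  have hjN : j < N := by
    by_contra h
    rw [heq j (by omega), hνN j (by omega), hνN _ (by omega)] at hlt
    exact lt_irrefl _ hlt
  by_cases hjN' : j + 1 < N
  · have hleast := isLeast_dotSwap (hle _) hj
    simp only [if_pos hjN']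
    refine ⟨mem_filter.mpr ⟨dotSwap_mem_lowerings hν hmem hjN' hlt, fun h => ?_⟩, hleast,
      dotSwap_dotSwap j κ, by rw [jtDet_dotSwap hjN', map_neg]⟩
    exact hleast.1.not_ge (h j).2
  · obtain rfl : N = j + 1 := by omega
    simp only [if_neg hjN']
    refine ⟨hκ, hj, trivial, ?_⟩
    rw [jtDet_eq_zero_of_neg (hlt.trans_eq (hνN _ le_rfl)), map_zero, neg_zero]

end Pieri

section StripChains

open Finset

theorem IsHorizontalStrip.refl {ν : ℕ → ℤ} (hν : Antitone ν) : IsHorizontalStrip ν ν :=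
  fun i => ⟨le_rfl, hν i.le_succ⟩

theorem IsHorizontalStrip.antitone_left {κ ν : ℕ → ℤ} (h : IsHorizontalStrip κ ν) : Antitone κ :=
  antitone_nat_of_succ_le fun i => (h (i + 1)).1.trans (h i).2

/-- `∅ = K 0 ⊆ K 1 ⊆ ⋯ ⊆ K r = ν` is a chain of partitions with at most `N` rows in which
consecutive partitions differ by horizontal strips. To make such chains unique as functions, they
are prolonged constantly beyond `r`. -/
structure IsStripChain (N r : ℕ) (ν : ℕ → ℤ) (K : ℕ → ℕ → ℤ) : Prop where
  zero : K 0 = 0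
  strip : ∀ i, IsHorizontalStrip (K i) (K (i + 1))
  stable : ∀ i, r ≤ i → K i = ν
  support : ∀ k, N ≤ k → ν k = 0

namespace IsStripChain

variable {N r : ℕ} {ν : ℕ → ℤ} {K : ℕ → ℕ → ℤ}

theorem monotone (h : IsStripChain N r ν K) : Monotone K :=
  monotone_nat_of_le_succ fun i k => (h.strip i k).1

theorem nonneg (h : IsStripChain N r ν K) (i k : ℕ) : 0 ≤ K i k := by
  have hle := h.monotone (Nat.zero_le i) k
  rwa [h.zero] at hle

theorem le_shape (h : IsStripChain N r ν K) (i k : ℕ) : K i k ≤ ν k := by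
  rw [← h.stable (max i r) (le_max_right _ _)]
  exact h.monotone (le_max_left _ _) k

theorem antitone (h : IsStripChain N r ν K) (i : ℕ) : Antitone (K i) :=
  (h.strip i).antitone_left

theorem eq_zero (h : IsStripChain N r ν K) (i : ℕ) {k : ℕ} (hk : N ≤ k) : K i k = 0 :=
  le_antisymm (h.support k hk ▸ h.le_shape i k) (h.nonneg i k)

end IsStripChain

theorem finite_isStripChain (N r : ℕ) (ν : ℕ → ℤ) : {K | IsStripChain N r ν K}.Finite := by
  let decode (x : Fin r → Fin N → Fin ((ν 0).toNat + 1)) (i k : ℕ) : ℤ :=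
    if hi : i < r then (if hk : k < N then (x ⟨i, hi⟩ ⟨k, hk⟩ : ℕ) else 0) else ν k
  refine (Set.finite_range decode).subset fun K (hK : IsStripChain N r ν K) => ?_
  have hbound (i k : ℕ) : (K i k).toNat < (ν 0).toNat + 1 :=
    Nat.lt_succ_of_le (Int.toNat_le_toNat
      ((hK.antitone i (Nat.zero_le k)).trans (hK.le_shape i 0)))
  refine ⟨fun i k => ⟨(K i k).toNat, hbound i k⟩, ?_⟩
  funext i k
  simp only [decode]
  split_ifs with hi hk
  · exact Int.toNat_of_nonneg (hK.nonneg i k)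
  · exact (hK.eq_zero i (not_lt.mp hk)).symm
  · rw [hK.stable i (not_lt.mp hi)]

/-- The finite set of chains of `r` horizontal strips from the empty partition to `ν`. -/
noncomputable def stripChains (N r : ℕ) (ν : ℕ → ℤ) : Finset (ℕ → ℕ → ℤ) :=
  (finite_isStripChain N r ν).toFinset

theorem mem_stripChains {N r : ℕ} {ν : ℕ → ℤ} {K : ℕ → ℕ → ℤ} :
    K ∈ stripChains N r ν ↔ IsStripChain N r ν K :=
  Set.Finite.mem_toFinset _

/-- The number of cells of the `i`-th strip `K (i + 1) / K i` of a chain. -/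
def stripSize (N : ℕ) (K : ℕ → ℕ → ℤ) (i : ℕ) : ℤ := ∑ k ∈ range N, (K (i + 1) k - K i k)

theorem stripSize_congr {N i : ℕ} {K K' : ℕ → ℕ → ℤ} (h : K i = K' i)
    (h' : K (i + 1) = K' (i + 1)) : stripSize N K i = stripSize N K' i := by
  rw [stripSize, stripSize, h, h']

theorem IsStripChain.stripSize_nonneg {N r : ℕ} {ν : ℕ → ℤ} {K : ℕ → ℕ → ℤ}
    (h : IsStripChain N r ν K) (i : ℕ) : 0 ≤ stripSize N K i :=
  Finset.sum_nonneg fun k _ => sub_nonneg.mpr (h.strip i k).1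

theorem stripChains_zero {N : ℕ} {ν : ℕ → ℤ} (hν : ν ≠ 0) : stripChains N 0 ν = ∅ :=
  Finset.eq_empty_of_forall_notMem fun _ hK =>
    have hK := mem_stripChains.mp hK
    hν ((hK.stable 0 le_rfl).symm.trans hK.zero)

theorem stripChains_zero_zero (N : ℕ) : stripChains N 0 0 = {0} := by
  ext K
  rw [mem_stripChains, mem_singleton]
  exact ⟨fun h => funext fun i => h.stable i (Nat.zero_le i),
    by rintro rfl; exact ⟨rfl, fun _ _ => ⟨le_rfl, le_rfl⟩, fun _ _ => rfl, fun _ _ => rfl⟩⟩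

/-- The chain consisting of the first `r` strips of `K`. -/
def truncateChain (r : ℕ) (K : ℕ → ℕ → ℤ) : ℕ → ℕ → ℤ := fun i => K (min i r)

/-- The chain obtained from a chain `K` of `r` strips by adding a last strip ending in `ν`. -/
def extendChain (r : ℕ) (ν : ℕ → ℤ) (K : ℕ → ℕ → ℤ) : ℕ → ℕ → ℤ :=
  fun i => if i ≤ r then K i else ν

theorem truncateChain_of_le {r i : ℕ} (hi : i ≤ r) (K : ℕ → ℕ → ℤ) : truncateChain r K i = K i := by
  rw [truncateChain, min_eq_left hi]

theorem truncateChain_of_ge {r i : ℕ} (hi : r ≤ i) (K : ℕ → ℕ → ℤ) : truncateChain r K i = K r := by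
  rw [truncateChain, min_eq_right hi]

theorem extendChain_of_le {r i : ℕ} (hi : i ≤ r) (ν : ℕ → ℤ) (K : ℕ → ℕ → ℤ) :
    extendChain r ν K i = K i :=
  if_pos hi

theorem extendChain_of_lt {r i : ℕ} (hi : r < i) (ν : ℕ → ℤ) (K : ℕ → ℕ → ℤ) :
    extendChain r ν K i = ν :=
  if_neg hi.not_ge

theorem IsStripChain.truncateChain {N r : ℕ} {ν : ℕ → ℤ} {K : ℕ → ℕ → ℤ}
    (h : IsStripChain N (r + 1) ν K) : IsStripChain N r (K r) (truncateChain r K) where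
  zero := by rw [truncateChain_of_le (Nat.zero_le r), h.zero]
  strip i := by
    rcases lt_or_ge i r with hi | hi
    · rw [truncateChain_of_le hi.le, truncateChain_of_le hi]
      exact h.strip i
    · rw [truncateChain_of_ge hi, truncateChain_of_ge (hi.trans i.le_succ)]
      exact .refl (h.antitone r)
  stable _ hi := truncateChain_of_ge hi K
  support _ hk := h.eq_zero r hk

theorem IsStripChain.extendChain {N r : ℕ} {κ ν : ℕ → ℤ} {K : ℕ → ℕ → ℤ}
    (h : IsStripChain N r κ K) (hν : Antitone ν) (hνN : ∀ k, N ≤ k → ν k = 0)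
    (hstrip : IsHorizontalStrip κ ν) : IsStripChain N (r + 1) ν (extendChain r ν K) where
  zero := by rw [extendChain_of_le (Nat.zero_le r), h.zero]
  strip i := by
    rcases lt_trichotomy i r with hi | rfl | hi
    · rw [extendChain_of_le hi.le, extendChain_of_le hi]
      exact h.strip i
    · rwa [extendChain_of_le le_rfl, extendChain_of_lt i.lt_succ_self, h.stable i le_rfl]
    · rw [extendChain_of_lt hi, extendChain_of_lt (hi.trans i.lt_succ_self)]
      exact .refl hν
  stable _ hi := extendChain_of_lt hi ν K
  support := hνN

theorem IsStripChain.extendChain_truncateChain {N r : ℕ} {ν : ℕ → ℤ} {K : ℕ → ℕ → ℤ}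
    (h : IsStripChain N (r + 1) ν K) : _root_.extendChain r ν (_root_.truncateChain r K) = K := by
  funext i
  rcases le_or_gt i r with hi | hi
  · rw [extendChain_of_le hi, truncateChain_of_le hi]
  · rw [extendChain_of_lt hi, h.stable i hi]

theorem IsStripChain.truncateChain_extendChain {N r : ℕ} {κ : ℕ → ℤ} {K : ℕ → ℕ → ℤ}
    (h : IsStripChain N r κ K) (ν : ℕ → ℤ) :
    _root_.truncateChain r (_root_.extendChain r ν K) = K := by
  funext i
  rcases le_total i r with hi | hi
  · rw [truncateChain_of_le hi, extendChain_of_le hi]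
  · rw [truncateChain_of_ge hi, extendChain_of_le le_rfl, h.stable i hi, h.stable r le_rfl]

theorem IsStripChain.mem_lowerings {N r : ℕ} {ν : ℕ → ℤ} {K : ℕ → ℕ → ℤ}
    (h : IsStripChain N (r + 1) ν K) {m : ℕ} (hm : stripSize N K r = m) :
    K r ∈ lowerings N m ν := by
  refine _root_.mem_lowerings.mpr ⟨h.le_shape r, fun i hi => ?_, ?_⟩
  · rw [h.eq_zero r hi, h.support i hi]
  · rw [← hm, stripSize, h.stable (r + 1) le_rfl, Finset.sum_sub_distrib, add_sub_cancel]

theorem card_filter_stripChains_succ {N r m : ℕ} {ν : ℕ → ℤ} (hν : Antitone ν)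
    (hνN : ∀ k, N ≤ k → ν k = 0) (α : Fin r → ℤ) [DecidablePred (IsHorizontalStrip · ν)] :
    #{K ∈ stripChains N (r + 1) ν | (∀ i : Fin r, stripSize N K i = α i) ∧ stripSize N K r = m}
      = ∑ κ ∈ lowerings N m ν with IsHorizontalStrip κ ν,
          #{K ∈ stripChains N r κ | ∀ i : Fin r, stripSize N K i = α i} := by
  classical
  rw [Finset.card_eq_sum_card_fiberwise (f := fun K => K r) (fun K hK => ?_)]
  · refine Finset.sum_congr rfl fun κ hκ => ?_
    obtain ⟨hκmem, hκν⟩ := mem_filter.mp hκ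
    refine Finset.card_nbij' (truncateChain r) (extendChain r ν) ?_ ?_ ?_ ?_
    all_goals simp only [Set.MapsTo, Set.LeftInvOn, mem_coe, mem_filter, mem_stripChains]
    · rintro K ⟨⟨hK, hα, -⟩, rfl⟩
      refine ⟨hK.truncateChain, fun i => ?_⟩
      rw [← hα i]
      exact stripSize_congr (truncateChain_of_le i.2.le K) (truncateChain_of_le i.2 K)
    · rintro K ⟨hK, hα⟩
      refine ⟨⟨hK.extendChain hν hνN hκν, fun i => ?_, ?_⟩, ?_⟩
      · rw [← hα i]
        exact stripSize_congr (extendChain_of_le i.2.le ν K) (extendChain_of_le i.2 ν K)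
      · rw [stripSize, extendChain_of_le le_rfl, extendChain_of_lt r.lt_succ_self,
          hK.stable r le_rfl, Finset.sum_sub_distrib, ← (_root_.mem_lowerings.mp hκmem).2.2,
          add_sub_cancel_left]
      · rw [extendChain_of_le le_rfl, hK.stable r le_rfl]
    · rintro K ⟨⟨hK, -⟩, -⟩
      exact hK.extendChain_truncateChain
    · rintro K ⟨hK, -⟩
      exact hK.truncateChain_extendChain ν
  · obtain ⟨hK, -, hm⟩ := mem_filter.mp hK
    have hK := mem_stripChains.mp hK
    exact mem_filter.mpr ⟨hK.mem_lowerings hm, hK.stable (r + 1) le_rfl ▸ hK.strip r⟩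

end StripChains

section ChainExpansion

open Finset

theorem det_ite_eq_of_strictAnti {R β : Type*} [CommRing R] [LinearOrder β] {n : ℕ}
    {a b : Fin n → β} (ha : StrictAnti a) (hb : StrictAnti b) :
    (Matrix.of fun i j => if a i = b j then (1 : R) else 0).det = if a = b then 1 else 0 := by
  split_ifs with hab
  · subst hab
    simp only [ha.injective.eq_iff]
    exact Matrix.det_one
  · obtain ⟨i, hi⟩ : ∃ i, ∀ j, a i ≠ b j := by
      by_contra! hrange
      choose σ hσ using hrange
      have hmono : StrictMono σ := fun i j hij => hb.lt_iff_gt.mp (by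
        rw [← hσ, ← hσ]
        exact ha hij)
      exact hab (funext fun i => by
        rw [hσ i, le_antisymm (hmono.apply_le (x := i)) (hmono.le_apply (x := i))])
    exact Matrix.det_eq_zero_of_row_eq_zero i fun j => if_neg (hi j)

theorem strictAnti_sub_of_succ_le {n : ℕ} {w : ℕ → ℤ} (hw : ∀ i, i + 1 < n → w (i + 1) ≤ w i) :
    StrictAnti fun i : Fin n => w i - i := by
  obtain _ | n := n
  · exact fun i => i.elim0
  · refine Fin.strictAnti_iff_succ_lt.mpr fun i => ?_
    have := hw i (by omega)
    simp only [Fin.val_succ, Fin.val_castSucc]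
    omega

theorem hallForm_one_jtDet {N : ℕ} {ν : ℕ → ℤ} [Decidable (ν = 0)] (hν : Antitone ν)
    (hνN : ∀ k, N ≤ k → ν k = 0) :
    hallForm 1 (jtDet N ν) = if ν = 0 then 1 else 0 := by
  have eq_zero_iff : ((fun i : Fin N => ν i - i) = fun i : Fin N => (0 : ℕ → ℤ) i - i) ↔ ν = 0 := by
    refine ⟨fun h => funext fun k => ?_, fun h => by rw [h]⟩
    rcases lt_or_ge k N with hk | hk
    · exact sub_left_injective (congrFun h ⟨k, hk⟩)
    · exact hνN k hk
  rw [hallForm_one, jtDet, RingHom.map_det, ← if_congr eq_zero_iff rfl rfl,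
    ← det_ite_eq_of_strictAnti (strictAnti_sub_of_succ_le fun i _ => hν i.le_succ)
      (strictAnti_sub_of_succ_le (w := 0) fun _ _ => le_rfl)]
  congr 1
  ext i j
  simp [constantCoeff_hInt, eq_neg_iff_add_eq_zero]

theorem hallForm_prod_hInt_jtDet {N r : ℕ} (α : Fin r → ℤ) {ν : ℕ → ℤ} (hν : Antitone ν)
    (hνN : ∀ k, N ≤ k → ν k = 0) :
    hallForm (∏ i, hInt (α i)) (jtDet N ν)
      = #{K ∈ stripChains N r ν | ∀ i : Fin r, stripSize N K i = α i} := by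
  classical
  induction r generalizing ν with
  | zero =>
    rw [Fin.prod_univ_zero, hallForm_one_jtDet hν hνN]
    split_ifs with h
    · simp [h, stripChains_zero_zero]
    · simp [stripChains_zero h]
  | succ r ih =>
    simp only [Fin.forall_fin_succ', Fin.val_castSucc, Fin.val_last]
    rw [Fin.prod_univ_castSucc, mul_comm]
    rcases lt_or_ge (α (Fin.last r)) 0 with hneg | hnonneg
    · rw [hInt_of_neg hneg, zero_mul, map_zero, LinearMap.zero_apply, eq_comm, Nat.cast_eq_zero,
        Finset.card_eq_zero, Finset.filter_eq_empty_iff]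
      rintro K hK ⟨-, hsize⟩
      exact hneg.not_ge (hsize ▸ (mem_stripChains.mp hK).stripSize_nonneg r)
    · obtain ⟨m, hm⟩ := Int.eq_ofNat_of_zero_le hnonneg
      rw [hm, hallForm_hInt_mul_jtDet_of_antitone N m _ hν hνN,
        card_filter_stripChains_succ hν hνN, Nat.cast_sum]
      refine Finset.sum_congr rfl fun κ hκ => ?_
      obtain ⟨hκmem, hκν⟩ := mem_filter.mp hκ
      refine ih _ hκν.antitone_left fun k hk => ?_
      rw [(mem_lowerings.mp hκmem).2.1 k hk, hνN k hk]

theorem hallForm_prod_hInt_mul_prod_hInt_jtDet {N a b : ℕ} (β : Fin a → ℤ) (γ : Fin b → ℤ)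
    {ν : ℕ → ℤ} (hν : Antitone ν) (hνN : ∀ k, N ≤ k → ν k = 0) :
    hallForm ((∏ j, hInt (β j)) * ∏ j, hInt (γ j)) (jtDet N ν)
      = ∑ K ∈ stripChains N (a + b) ν,
          (∏ j : Fin a, if β j = stripSize N K j then (1 : ℚ) else 0) *
            ∏ j : Fin b, if γ j = stripSize N K (a + j) then (1 : ℚ) else 0 := by
  have hprod : (∏ j, hInt (β j)) * ∏ j, hInt (γ j) = ∏ i, hInt (Fin.append β γ i) := by
    simp [Fin.prod_univ_add]
  rw [hprod, hallForm_prod_hInt_jtDet _ hν hνN, Finset.card_filter, Nat.cast_sum]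
  refine Finset.sum_congr rfl fun K _ => ?_
  have hforall : (∀ i : Fin (a + b), stripSize N K i = Fin.append β γ i) ↔
      (∀ j ∈ (univ : Finset (Fin a)), β j = stripSize N K j) ∧
        ∀ j ∈ (univ : Finset (Fin b)), γ j = stripSize N K (a + j) := by
    simp [Fin.forall_fin_add, eq_comm]
  rw [Finset.prod_boole, Finset.prod_boole, if_congr hforall rfl rfl, ite_and, Nat.cast_ite,
    Nat.cast_ite, Nat.cast_one, Nat.cast_zero, ite_mul, one_mul, zero_mul]
  congr

/-- The signed indicator `∑_σ sgn σ [w = l_{σ}]` of the weights `w` which occur in the expansion of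
the Jacobi–Trudi determinant of `l` into products `∏ⱼ h_{w_j}`. -/
noncomputable def weightDet (n : ℕ) (l w : ℕ → ℤ) : ℚ :=
  Matrix.det (Matrix.of fun i j : Fin n => if l i - i = w j - j then 1 else 0)

theorem weightDet_dotSwap {i n : ℕ} (hi : i + 1 < n) (l w : ℕ → ℤ) :
    weightDet n l (dotSwap i w) = -weightDet n l w := by
  rw [weightDet, weightDet, ← Matrix.det_transpose, ← Matrix.det_transpose (Matrix.of _)]
  exact det_dotSwap hi w fun z c => if l c - c = z then 1 else 0

theorem weightDet_congr {n : ℕ} {l w w' : ℕ → ℤ} (h : ∀ j < n, w j = w' j) :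
    weightDet n l w = weightDet n l w' := by
  simp only [weightDet, h _ (Fin.is_lt _)]

/-- The signed weight with which a chain `K` of `a + b` strips contributes to the expansion of
`⟨s_l s_m, s_ν⟩`. -/
noncomputable def chainWeight (N a b : ℕ) (l m : ℕ → ℤ) (K : ℕ → ℕ → ℤ) : ℚ :=
  weightDet a l (stripSize N K) * weightDet b m fun j => stripSize N K (a + j)

theorem hallForm_jtDet_mul_jtDet {N : ℕ} (a b : ℕ) (l m : ℕ → ℤ) {ν : ℕ → ℤ} (hν : Antitone ν)
    (hνN : ∀ k, N ≤ k → ν k = 0) :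
    hallForm (jtDet a l * jtDet b m) (jtDet N ν)
      = ∑ K ∈ stripChains N (a + b) ν, chainWeight N a b l m K := by
  have jtDet_eq_sum (n : ℕ) (κ : ℕ → ℤ) : jtDet n κ = ∑ σ : Equiv.Perm (Fin n),
      (Equiv.Perm.sign σ : ℤ) • ∏ j : Fin n, hInt (κ (σ j) - (σ j : ℕ) + j) := by
    simp [jtDet, Matrix.det_apply, Units.smul_def]
  have weightDet_eq_sum (n : ℕ) (κ w : ℕ → ℤ) : weightDet n κ w = ∑ σ : Equiv.Perm (Fin n),
      (Equiv.Perm.sign σ : ℤ) • ∏ j : Fin n,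
        if κ (σ j) - (σ j : ℕ) + j = w j then (1 : ℚ) else 0 := by
    simp [weightDet, Matrix.det_apply, Units.smul_def, eq_sub_iff_add_eq]
  simp only [jtDet_eq_sum a, jtDet_eq_sum b, chainWeight, weightDet_eq_sum, Finset.sum_mul_sum,
    map_sum, LinearMap.sum_apply, smul_mul_smul_comm, map_zsmul, LinearMap.smul_apply,
    hallForm_prod_hInt_mul_prod_hInt_jtDet _ _ hν hνN, Finset.smul_sum]
  rw [Finset.sum_comm (s := stripChains N (a + b) ν)]
  exact Finset.sum_congr rfl fun σ _ => Finset.sum_comm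

end ChainExpansion

section Toggle

open Finset

/-- In the filling whose row `i` has `K (i + 1) k - K i k` letters `k + 1`, this is the
number of letters `≤ k` in row `i` minus the number of letters `≤ k + 1` in row `i + 1`. If it is
negative, then these two rows are not column strict. -/
def rowGap (K : ℕ → ℕ → ℤ) (i k : ℕ) : ℤ :=
  ∑ c ∈ range k, (K (i + 1) c - K i c) - ∑ c ∈ range (k + 1), (K (i + 2) c - K (i + 1) c)

/-- The chain obtained from `K` by modifying the member `K (i + 1)`: beyond the entry `k`, it is
reflected in the interval allowed by its neighbours `K i` and `K (i + 2)`, as in the Bender–Knuth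
involution. The entry `k` is chosen such that `stripSize` changes by `dotSwap i`. -/
def toggleChain (K : ℕ → ℕ → ℤ) (i k : ℕ) : ℕ → ℕ → ℤ :=
  Function.update K (i + 1) fun c =>
    if c < k then K (i + 1) c
    else if c = k then max (K i k) (K (i + 2) (k + 1)) - 1 - rowGap K i k
    else min (K i (c - 1)) (K (i + 2) c) + max (K i c) (K (i + 2) (c + 1)) - K (i + 1) c

theorem rowGap_zero (K : ℕ → ℕ → ℤ) (i : ℕ) : rowGap K i 0 = K (i + 1) 0 - K (i + 2) 0 := by
  simp [rowGap]

theorem rowGap_succ (K : ℕ → ℕ → ℤ) (i k : ℕ) :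
    rowGap K i (k + 1) = rowGap K i k + (K (i + 1) k - K i k)
      - (K (i + 2) (k + 1) - K (i + 1) (k + 1)) := by
  rw [rowGap, Finset.sum_range_succ _ k, Finset.sum_range_succ _ (k + 1), rowGap]
  ring

theorem rowGap_congr {K K' : ℕ → ℕ → ℤ} {i k : ℕ} (h : ∀ i, ∀ c < k, K i c = K' i c)
    (h₁ : K (i + 1) k = K' (i + 1) k) (h₂ : K (i + 2) k = K' (i + 2) k) :
    rowGap K i k = rowGap K' i k := by
  have hsum (i : ℕ) :
      ∑ c ∈ range k, (K (i + 1) c - K i c) = ∑ c ∈ range k, (K' (i + 1) c - K' i c) :=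
    Finset.sum_congr rfl fun c hc => by
      rw [h _ c (mem_range.mp hc), h _ c (mem_range.mp hc)]
  rw [rowGap, rowGap, Finset.sum_range_succ, Finset.sum_range_succ, h₁, h₂, hsum, hsum]

section

variable (K : ℕ → ℕ → ℤ) {i k : ℕ}

theorem toggleChain_of_ne {i' : ℕ} (h : i' ≠ i + 1) : toggleChain K i k i' = K i' :=
  Function.update_of_ne h _ _

theorem toggleChain_left : toggleChain K i k i = K i :=
  toggleChain_of_ne K (by omega)

theorem toggleChain_right : toggleChain K i k (i + 2) = K (i + 2) :=
  toggleChain_of_ne K (by omega)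

theorem toggleChain_of_lt {i' c : ℕ} (h : c < k) : toggleChain K i k i' c = K i' c := by
  rcases eq_or_ne i' (i + 1) with rfl | hi
  · rw [toggleChain, Function.update_self, if_pos h]
  · rw [toggleChain_of_ne K hi]

theorem toggleChain_apply_self :
    toggleChain K i k (i + 1) k = max (K i k) (K (i + 2) (k + 1)) - 1 - rowGap K i k := by
  simp [toggleChain]

theorem toggleChain_apply_succ {c : ℕ} (h : k ≤ c) :
    toggleChain K i k (i + 1) (c + 1) = min (K i c) (K (i + 2) (c + 1))
      + max (K i (c + 1)) (K (i + 2) (c + 2)) - K (i + 1) (c + 1) := by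
  rw [toggleChain, Function.update_self, if_neg (by omega), if_neg (by omega),
    add_tsub_cancel_right]

theorem rowGap_toggleChain_of_lt {i' c : ℕ} (h : c < k) :
    rowGap (toggleChain K i k) i' c = rowGap K i' c :=
  rowGap_congr (fun _ _ hc => toggleChain_of_lt K (hc.trans h)) (toggleChain_of_lt K h)
    (toggleChain_of_lt K h)

theorem rowGap_toggleChain_of_gt {i' : ℕ} (h : i < i') :
    rowGap (toggleChain K i k) i' k = rowGap K i' k :=
  rowGap_congr (fun _ _ hc => toggleChain_of_lt K hc) (by rw [toggleChain_of_ne K (by omega)])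
    (by rw [toggleChain_of_ne K (by omega)])

theorem rowGap_toggleChain_self :
    rowGap (toggleChain K i k) i k = max (K i k) (K (i + 2) (k + 1)) - 1 - K (i + 1) k := by
  have rowGap_sub : rowGap (toggleChain K i k) i k - toggleChain K i k (i + 1) k
      = rowGap K i k - K (i + 1) k := by
    simp only [rowGap, Finset.sum_range_succ, toggleChain_right]
    rw [Finset.sum_congr rfl fun c hc => by
        rw [toggleChain_of_lt K (mem_range.mp hc), toggleChain_of_lt K (mem_range.mp hc)],
      Finset.sum_congr (s₁ := range k) (f := fun c => K (i + 2) c - _) rfl fun c hc => by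
        rw [toggleChain_of_lt K (mem_range.mp hc)]]
    ring
  rw [toggleChain_apply_self] at rowGap_sub
  linarith

theorem toggleChain_toggleChain : toggleChain (toggleChain K i k) i k = K := by
  funext i' c
  rcases eq_or_ne i' (i + 1) with rfl | hi
  · rcases lt_trichotomy c k with hc | rfl | hc
    · rw [toggleChain_of_lt _ hc, toggleChain_of_lt _ hc]
    · rw [toggleChain_apply_self, rowGap_toggleChain_self, toggleChain_left, toggleChain_right]
      ring
    · obtain ⟨c, rfl⟩ := Nat.exists_eq_succ_of_ne_zero (Nat.ne_zero_of_lt hc)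
      rw [toggleChain_apply_succ _ (Nat.le_of_lt_succ hc), toggleChain_left, toggleChain_right,
        toggleChain_apply_succ _ (Nat.le_of_lt_succ hc)]
      ring
  · rw [toggleChain_of_ne _ hi, toggleChain_of_ne _ hi]

theorem sum_add_toggleChain {n : ℕ} (hn : k ≤ n) :
    ∑ c ∈ range (n + 1), (K (i + 1) c + toggleChain K i k (i + 1) c)
      = ∑ c ∈ range n, K i c + ∑ c ∈ range (n + 1), K (i + 2) c - 1
        + max (K i n) (K (i + 2) (n + 1)) := by
  induction n, hn using Nat.le_induction with
  | base =>
    rw [Finset.sum_range_succ, toggleChain_apply_self, rowGap,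
      Finset.sum_congr rfl fun c hc => by rw [toggleChain_of_lt K (mem_range.mp hc)]]
    simp only [Finset.sum_range_succ, Finset.sum_add_distrib, Finset.sum_sub_distrib]
    ring
  | succ n hn ih =>
    rw [Finset.sum_range_succ, ih, toggleChain_apply_succ K hn, Finset.sum_range_succ (K i) n,
      Finset.sum_range_succ (K (i + 2)) (n + 1)]
    linarith [min_add_max (K i n) (K (i + 2) (n + 1))]

end

namespace IsStripChain

variable {N r : ℕ} {ν : ℕ → ℤ} {K : ℕ → ℕ → ℤ} {i k : ℕ}

theorem max_le (h : IsStripChain N r ν K) (i c : ℕ) :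
    max (K i c) (K (i + 2) (c + 1)) ≤ K (i + 1) c :=
  _root_.max_le (h.strip i c).1 (h.strip (i + 1) c).2

theorem le_min (h : IsStripChain N r ν K) (i c : ℕ) :
    K (i + 1) (c + 1) ≤ min (K i c) (K (i + 2) (c + 1)) :=
  _root_.le_min (h.strip i c).2 (h.strip (i + 1) (c + 1)).1

theorem max_le_toggleChain (h : IsStripChain N r ν K) (hneg : rowGap K i k < 0) (c : ℕ) :
    max (K i c) (K (i + 2) (c + 1)) ≤ toggleChain K i k (i + 1) c := by
  rcases lt_trichotomy c k with hc | rfl | hc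
  · rw [toggleChain_of_lt K hc]
    exact h.max_le i c
  · rw [toggleChain_apply_self]
    omega
  · obtain ⟨c, rfl⟩ := Nat.exists_eq_succ_of_ne_zero (Nat.ne_zero_of_lt hc)
    rw [toggleChain_apply_succ K (Nat.le_of_lt_succ hc)]
    linarith [h.le_min i c]

theorem toggleChain_zero_le (h : IsStripChain N r ν K) :
    toggleChain K i k (i + 1) 0 ≤ K (i + 2) 0 := by
  rcases k.eq_zero_or_pos with rfl | hk
  · rw [toggleChain_apply_self, rowGap_zero]
    linarith [h.max_le i 0]
  · rw [toggleChain_of_lt K hk]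
    exact (h.strip (i + 1) 0).1

theorem toggleChain_succ_le_min (h : IsStripChain N r ν K) (hk : ∀ c < k, 0 ≤ rowGap K i c)
    (c : ℕ) : toggleChain K i k (i + 1) (c + 1) ≤ min (K i c) (K (i + 2) (c + 1)) := by
  rcases lt_trichotomy (c + 1) k with hc | rfl | hc
  · rw [toggleChain_of_lt K hc]
    exact h.le_min i c
  · rw [toggleChain_apply_self, rowGap_succ]
    linarith [hk c c.lt_succ_self, h.max_le i c, h.max_le i (c + 1),
      min_add_max (K i c) (K (i + 2) (c + 1))]
  · rw [toggleChain_apply_succ K (Nat.le_of_lt_succ hc)]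
    linarith [h.max_le i (c + 1)]

theorem toggleChain_le (h : IsStripChain N r ν K) (hk : ∀ c < k, 0 ≤ rowGap K i c) :
    ∀ c, toggleChain K i k (i + 1) c ≤ K (i + 2) c
  | 0 => h.toggleChain_zero_le
  | c + 1 => (h.toggleChain_succ_le_min hk c).trans (min_le_right _ _)

theorem toggleChain (h : IsStripChain N r ν K) (hi : i + 1 < r)
    (hk : ∀ c < k, 0 ≤ rowGap K i c) (hneg : rowGap K i k < 0) :
    IsStripChain N r ν (toggleChain K i k) where
  zero := by rw [toggleChain_of_ne K (by omega), h.zero]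
  strip i' := by
    rcases eq_or_ne i' i with rfl | hi'
    · rw [toggleChain_left]
      exact fun c => ⟨(le_max_left _ _).trans (h.max_le_toggleChain hneg c),
        (h.toggleChain_succ_le_min hk c).trans (min_le_left _ _)⟩
    rcases eq_or_ne i' (i + 1) with rfl | hi''
    · rw [toggleChain_right]
      exact fun c => ⟨h.toggleChain_le hk c,
        (le_max_right _ _).trans (h.max_le_toggleChain hneg c)⟩
    · rw [toggleChain_of_ne K hi'', toggleChain_of_ne K (by omega)]
      exact h.strip i'
  stable i' hi' := by rw [toggleChain_of_ne K (by omega), h.stable i' hi']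
  support := h.support

theorem sum_toggleChain (h : IsStripChain N r ν K) (hk : k < N) :
    ∑ c ∈ range N, K (i + 1) c + ∑ c ∈ range N, _root_.toggleChain K i k (i + 1) c
      = ∑ c ∈ range N, K i c + ∑ c ∈ range N, K (i + 2) c - 1 := by
  obtain ⟨n, rfl⟩ := Nat.exists_eq_succ_of_ne_zero (Nat.ne_zero_of_lt hk)
  rw [← Finset.sum_add_distrib, sum_add_toggleChain K (Nat.le_of_lt_succ hk),
    h.eq_zero (i + 2) le_rfl, max_eq_left (h.nonneg i n), Finset.sum_range_succ (K i)]
  ring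

theorem stripSize_toggleChain (h : IsStripChain N r ν K) (hk : k < N) :
    stripSize N (_root_.toggleChain K i k) = dotSwap i (stripSize N K) := by
  have hsum := h.sum_toggleChain (i := i) hk
  funext j
  rcases eq_or_ne j i with rfl | hj
  · rw [dotSwap_apply_left]
    simp only [stripSize, toggleChain_left, Finset.sum_sub_distrib]
    linarith
  rcases eq_or_ne j (i + 1) with rfl | hj'
  · rw [dotSwap_apply_right]
    simp only [stripSize, toggleChain_right, Finset.sum_sub_distrib]
    linarith
  · rw [dotSwap_apply_of_ne hj hj']
    exact stripSize_congr (toggleChain_of_ne K hj') (toggleChain_of_ne K (by omega))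

theorem chainWeight_toggleChain {a b : ℕ} (l m : ℕ → ℤ) (h : IsStripChain N (a + b) ν K)
    (hi : i + 1 < a + b) (hia : i + 1 ≠ a) (hk : k < N) :
    chainWeight N a b l m (_root_.toggleChain K i k) = -chainWeight N a b l m K := by
  simp only [chainWeight, h.stripSize_toggleChain hk]
  rcases lt_or_ge (i + 1) a with hlt | hge
  · rw [weightDet_dotSwap hlt, neg_mul]
    congr 2
    exact weightDet_congr fun j _ => dotSwap_apply_of_ne (by omega) (by omega) _
  · obtain ⟨c, rfl⟩ := Nat.exists_eq_add_of_le (Nat.le_of_lt_succ (lt_of_le_of_ne hge hia.symm))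
    rw [← mul_neg, ← weightDet_dotSwap (i := c) (by omega)]
    congr 1
    · exact weightDet_congr fun j _ => dotSwap_apply_of_ne (by omega) (by omega) _
    · refine weightDet_congr fun j _ => ?_
      rcases eq_or_ne j c with rfl | hj
      · rw [dotSwap_apply_left, dotSwap_apply_left, add_assoc]
      rcases eq_or_ne j (c + 1) with rfl | hj'
      · rw [dotSwap_apply_right, ← add_assoc, dotSwap_apply_right]
      · rw [dotSwap_apply_of_ne hj hj', dotSwap_apply_of_ne (by omega) (by omega)]

end IsStripChain

/-- The pairs `(k, i)` such that the rows `i` and `i + 1` of the filling encoded by `K`, which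
belong to the same one of the two blocks `[0, a)` and `[a, r)`, violate column strictness at the
letter `k + 1`. The order looks for the smallest letter first and then for the largest row. -/
def violations (N a r : ℕ) (K : ℕ → ℕ → ℤ) : Set (ℕ ×ₗ (Fin r)ᵒᵈ) :=
  {j | let k := (ofLex j).1
       let i : Fin r := OrderDual.ofDual (ofLex j).2
       (i : ℕ) + 1 < r ∧ (i : ℕ) + 1 ≠ a ∧ k < N ∧ rowGap K i k < 0}

theorem mem_violations {N a r k : ℕ} {K : ℕ → ℕ → ℤ} {i : Fin r} :
    toLex (k, OrderDual.toDual i) ∈ violations N a r K ↔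
      (i : ℕ) + 1 < r ∧ (i : ℕ) + 1 ≠ a ∧ k < N ∧ rowGap K i k < 0 :=
  Iff.rfl

theorem IsStripChain.isLeast_violations_toggleChain {N a r k : ℕ} {ν : ℕ → ℤ} {K : ℕ → ℕ → ℤ}
    {i : Fin r} (h : IsStripChain N r ν K)
    (hleast : IsLeast (violations N a r K) (toLex (k, OrderDual.toDual i))) :
    IsLeast (violations N a r (_root_.toggleChain K i k)) (toLex (k, OrderDual.toDual i)) := by
  obtain ⟨hi, hia, hk, -⟩ := mem_violations.mp hleast.1
  refine ⟨mem_violations.mpr ⟨hi, hia, hk, ?_⟩, fun j hj => ?_⟩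
  · rw [rowGap_toggleChain_self]
    linarith [h.max_le i k]
  · obtain ⟨⟨k', i'⟩, rfl⟩ := toLex.surjective j
    obtain ⟨i', rfl⟩ := OrderDual.toDual.surjective i'
    obtain ⟨hi', hia', hk', hneg⟩ := mem_violations.mp hj
    refine not_lt.mp fun hlt => (hleast.2 (mem_violations.mpr ⟨hi', hia', hk', ?_⟩)).not_gt hlt
    rcases Prod.Lex.toLex_lt_toLex.mp hlt with hlt | ⟨heq, hlt⟩
    · rwa [rowGap_toggleChain_of_lt K hlt] at hneg
    · obtain rfl : k' = k := heq
      have hlt : (i : ℕ) < i' := OrderDual.toDual_lt_toDual.mp hlt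
      rwa [rowGap_toggleChain_of_gt K hlt] at hneg

open Classical in
theorem sum_chainWeight_violations_nonempty (N a b : ℕ) (l m ν : ℕ → ℤ) :
    ∑ K ∈ stripChains N (a + b) ν with (violations N a (a + b) K).Nonempty,
      chainWeight N a b l m K = 0 := by
  refine sum_eq_zero_of_isLeast_toggle _ _ (violations N a (a + b))
    (fun j K => toggleChain K (OrderDual.ofDual (ofLex j).2 : Fin (a + b)) (ofLex j).1)
    (fun K hK => (mem_filter.mp hK).2) fun K hK j hj => ?_
  obtain ⟨⟨k, i⟩, rfl⟩ := toLex.surjective j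
  obtain ⟨i, rfl⟩ := OrderDual.toDual.surjective i
  have hK := mem_stripChains.mp (mem_filter.mp hK).1
  obtain ⟨hi, hia, hk, hneg⟩ := mem_violations.mp hj.1
  have hgap (c : ℕ) (hc : c < k) : 0 ≤ rowGap K i c := not_lt.mp fun hlt =>
    (hj.2 (mem_violations.mpr ⟨hi, hia, hc.trans hk, hlt⟩)).not_gt
      (Prod.Lex.toLex_lt_toLex.mpr (Or.inl hc))
  have hleast := hK.isLeast_violations_toggleChain hj
  exact ⟨mem_filter.mpr ⟨mem_stripChains.mpr (hK.toggleChain hi hgap hneg), _, hleast.1⟩, hleast,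
    toggleChain_toggleChain K, hK.chainWeight_toggleChain l m hi hia hk⟩

end Toggle

section LRChains

/-- The strip chains encoding pairs of column strict tableaux, where the strips of the blocks
`[0, a)` and `[a, a + b)` are the rows of the first and of the second tableau. The row lengths of
the tableaux are given by `l` and `m`. -/
structure IsLRChain (N a b : ℕ) (l m ν : ℕ → ℤ) (K : ℕ → ℕ → ℤ) : Prop extends
    IsStripChain N (a + b) ν K where
  rowGap_nonneg : ∀ i, i + 1 ≠ a → ∀ k, 0 ≤ rowGap K i k
  stripSize_left : ∀ i < a, stripSize N K i = l i
  stripSize_right : ∀ j < b, stripSize N K (a + j) = m j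

namespace IsStripChain

variable {N r : ℕ} {ν : ℕ → ℤ} {K : ℕ → ℕ → ℤ}

theorem rowGap_nonneg_of_forall_lt (h : IsStripChain N r ν K) {i : ℕ}
    (hN : ∀ k < N, 0 ≤ rowGap K i k) (k : ℕ) : 0 ≤ rowGap K i k := by
  induction k with
  | zero =>
    rcases N.eq_zero_or_pos with rfl | hpos
    · rw [rowGap_zero, h.eq_zero _ le_rfl, h.eq_zero _ le_rfl, sub_zero]
    · exact hN 0 hpos
  | succ k ih =>
    rcases lt_or_ge (k + 1) N with hk | hk
    · exact hN _ hk
    · rw [rowGap_succ, h.eq_zero (i + 2) hk, h.eq_zero (i + 1) hk]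
      linarith [(h.strip i k).1]

theorem rowGap_nonneg_of_le (h : IsStripChain N r ν K) {i : ℕ} (hi : r ≤ i + 1) (k : ℕ) :
    0 ≤ rowGap K i k := by
  rw [rowGap, h.stable (i + 2) (by omega), h.stable (i + 1) hi]
  simpa using Finset.sum_nonneg fun c _ => sub_nonneg.mpr (h.le_shape i c)

theorem violations_eq_empty_iff (h : IsStripChain N r ν K) {a : ℕ} :
    violations N a r K = ∅ ↔ ∀ i, i + 1 ≠ a → ∀ k, 0 ≤ rowGap K i k := by
  refine ⟨fun hempty i hia k => ?_, fun hgap => Set.eq_empty_of_forall_notMem ?_⟩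
  · rcases lt_or_ge (i + 1) r with hi | hi
    · refine h.rowGap_nonneg_of_forall_lt (fun k hk => not_lt.mp fun hneg => ?_) k
      have hmem := mem_violations (i := ⟨i, by omega⟩).mpr ⟨hi, hia, hk, hneg⟩
      exact Set.notMem_empty _ (hempty ▸ hmem)
    · exact h.rowGap_nonneg_of_le hi k
  · rintro j ⟨-, hia, -, hneg⟩
    exact hneg.not_ge (hgap _ hia _)

theorem stripSize_succ_le (h : IsStripChain N r ν K) {i : ℕ} (hgap : ∀ k, 0 ≤ rowGap K i k) :
    stripSize N K (i + 1) ≤ stripSize N K i := by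
  have rowGap_eq : rowGap K i N = stripSize N K i - stripSize N K (i + 1) := by
    rw [rowGap, Finset.sum_range_succ, h.eq_zero (i + 2) le_rfl, h.eq_zero (i + 1) le_rfl, sub_zero,
      add_zero, stripSize, stripSize]
  linarith [hgap N]

end IsStripChain

theorem weightDet_eq_ite {n : ℕ} {l w : ℕ → ℤ} (hl : Antitone l)
    (hw : ∀ i, i + 1 < n → w (i + 1) ≤ w i) [Decidable (∀ i < n, w i = l i)] :
    weightDet n l w = if ∀ i < n, w i = l i then 1 else 0 := by
  rw [weightDet, det_ite_eq_of_strictAnti (strictAnti_sub_of_succ_le fun i _ => hl i.le_succ)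
    (strictAnti_sub_of_succ_le hw)]
  refine if_congr ?_ rfl rfl
  simp [funext_iff, Fin.forall_iff, eq_comm]

theorem IsStripChain.chainWeight_eq_ite {N a b : ℕ} {l m ν : ℕ → ℤ} {K : ℕ → ℕ → ℤ}
    (h : IsStripChain N (a + b) ν K) (hl : Antitone l) (hm : Antitone m)
    (hgap : ∀ i, i + 1 ≠ a → ∀ k, 0 ≤ rowGap K i k) [Decidable (IsLRChain N a b l m ν K)] :
    chainWeight N a b l m K = if IsLRChain N a b l m ν K then 1 else 0 := by
  classical
  have isLRChain_iff : IsLRChain N a b l m ν K ↔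
      (∀ i < a, stripSize N K i = l i) ∧ ∀ j < b, stripSize N K (a + j) = m j :=
    ⟨fun hK => ⟨hK.stripSize_left, hK.stripSize_right⟩, fun hsize => ⟨h, hgap, hsize.1, hsize.2⟩⟩
  rw [chainWeight,
    weightDet_eq_ite hl fun i hi => h.stripSize_succ_le (hgap i hi.ne),
    weightDet_eq_ite (w := fun j => stripSize N K (a + j)) hm fun j _ =>
      h.stripSize_succ_le (hgap (a + j) (by omega)),
    if_congr isLRChain_iff rfl rfl, ite_and, ite_mul, one_mul, zero_mul]

theorem hallForm_jtDet_mul_jtDet_eq_card (N a b : ℕ) {l m ν : ℕ → ℤ} (hl : Antitone l)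
    (hm : Antitone m) (hν : Antitone ν) (hνN : ∀ k, N ≤ k → ν k = 0) :
    hallForm (jtDet a l * jtDet b m) (jtDet N ν) = Nat.card {K // IsLRChain N a b l m ν K} := by
  classical
  have hterm : ∀ K ∈ {K ∈ stripChains N (a + b) ν | ¬(violations N a (a + b) K).Nonempty},
      chainWeight N a b l m K = if IsLRChain N a b l m ν K then 1 else 0 := by
    intro K hK
    obtain ⟨hK, hempty⟩ := Finset.mem_filter.mp hK
    have hK := mem_stripChains.mp hK
    exact hK.chainWeight_eq_ite hl hm
      (hK.violations_eq_empty_iff.mp (Set.not_nonempty_iff_eq_empty.mp hempty))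
  rw [hallForm_jtDet_mul_jtDet a b l m hν hνN,
    ← Finset.sum_filter_add_sum_filter_not _ fun K => (violations N a (a + b) K).Nonempty,
    sum_chainWeight_violations_nonempty, zero_add, Finset.sum_congr rfl hterm, Finset.sum_boole,
    Nat.subtype_card _ fun K => ?_]
  rw [Finset.mem_filter, Finset.mem_filter, mem_stripChains, Set.not_nonempty_iff_eq_empty]
  exact ⟨And.right, fun hK => ⟨⟨hK.toIsStripChain,
    hK.violations_eq_empty_iff.mpr hK.rowGap_nonneg⟩, hK⟩⟩

end LRChains

section Rows

/-- Weakly increasing lists of positive integers, that is, the possible rows of a column strict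
tableau. -/
structure IsRow (r : List ℕ) : Prop where
  sorted : r.Pairwise (· ≤ ·)
  pos : ∀ x ∈ r, 0 < x

theorem IsRow.nil : IsRow [] := ⟨List.Pairwise.nil, by simp⟩

/-- The row `v` may lie directly above the row `u` in a column strict tableau of straight shape. -/
def ColumnStrict (u v : List ℕ) : Prop :=
  v.length ≤ u.length ∧ ∀ j < v.length, u.getD j 0 < v.getD j 0

theorem forall_getD {α : Type*} {P : α → Prop} {l : List α} {d : α} (h : ∀ x ∈ l, P x) (hd : P d)
    (i : ℕ) : P (l.getD i d) := by
  rcases lt_or_ge i l.length with hi | hi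
  · rw [List.getD_eq_getElem _ _ hi]
    exact h _ (List.getElem_mem hi)
  · rwa [List.getD_eq_default _ _ hi]

theorem exists_append_of_pairwise_le {α : Type*} [LinearOrder α] {r : List α}
    (hr : r.Pairwise (· ≤ ·)) (t : α) :
    ∃ u v, r = u ++ v ∧ (∀ x ∈ u, x ≤ t) ∧ ∀ x ∈ v, t < x := by
  induction r with
  | nil => exact ⟨[], [], by simp⟩
  | cons x r ih =>
    obtain ⟨hx, hr⟩ := List.pairwise_cons.mp hr
    rcases le_or_gt x t with hxt | hxt
    · obtain ⟨u, v, rfl, hu, hv⟩ := ih hr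
      exact ⟨x :: u, v, rfl, by simpa [hxt] using hu, hv⟩
    · exact ⟨[], x :: r, rfl, by simp, by simpa [hxt] using fun y hy => hxt.trans_le (hx y hy)⟩

theorem lt_countP_le_iff {α : Type*} [LinearOrder α] {r : List α} (hr : r.Pairwise (· ≤ ·))
    (t d : α) (j : ℕ) : j < r.countP (· ≤ t) ↔ j < r.length ∧ r.getD j d ≤ t := by
  obtain ⟨u, v, rfl, hu, hv⟩ := exists_append_of_pairwise_le hr t
  have hcount : (u ++ v).countP (· ≤ t) = u.length := by
    rw [List.countP_append, List.countP_eq_length.mpr (by simpa using hu),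
      List.countP_eq_zero.mpr (by simpa using hv), Nat.add_zero]
  rw [hcount, List.length_append]
  refine ⟨fun hj => ⟨by omega, ?_⟩, fun ⟨hj, hle⟩ => not_le.mp fun hge => hle.not_gt ?_⟩
  · rw [List.getD_append _ _ _ _ hj, List.getD_eq_getElem _ _ hj]
    exact hu _ (List.getElem_mem hj)
  · rw [List.getD_append_right _ _ _ _ hge,
      List.getD_eq_getElem _ _ (Nat.sub_lt_left_of_lt_add hge hj)]
    exact hv _ (List.getElem_mem _)

/-- The letters at most `k` of `u` have to reach as far as the letters at most `k + 1` of `v`. -/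
theorem columnStrict_iff {u v : List ℕ} (hu : u.Pairwise (· ≤ ·)) (hv : IsRow v) :
    ColumnStrict u v ↔ ∀ k, v.countP (· ≤ k + 1) ≤ u.countP (· ≤ k) := by
  refine ⟨fun ⟨hlen, hlt⟩ k => le_of_forall_lt fun j hj => ?_, fun hcount => ?_⟩
  · obtain ⟨hjv, hle⟩ := (lt_countP_le_iff hv.sorted (k + 1) 0 j).mp hj
    exact (lt_countP_le_iff hu k 0 j).mpr
      ⟨hjv.trans_le hlen, Nat.le_of_lt_succ ((hlt j hjv).trans_le hle)⟩
  · have below (j : ℕ) (hj : j < v.length) : j < u.length ∧ u.getD j 0 < v.getD j 0 := by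
      obtain ⟨k, hk⟩ : ∃ k, v.getD j 0 = k + 1 := Nat.exists_eq_add_one.mpr <| by
        rw [List.getD_eq_getElem _ _ hj]
        exact hv.pos _ (List.getElem_mem hj)
      have hjv := (lt_countP_le_iff hv.sorted (k + 1) 0 j).mpr ⟨hj, hk.le⟩
      obtain ⟨hju, hle⟩ := (lt_countP_le_iff hu k 0 j).mp (hjv.trans_le (hcount k))
      exact ⟨hju, hk ▸ Nat.lt_succ_of_le hle⟩
    exact ⟨le_of_forall_lt fun j hj => (below j hj).1, fun j hj => (below j hj).2⟩

theorem countP_le_succ (r : List ℕ) (n : ℕ) :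
    r.countP (· ≤ n + 1) = r.countP (· ≤ n) + r.count (n + 1) := by
  induction r with
  | nil => rfl
  | cons x r ih =>
    simp only [List.countP_cons, List.count_cons, ih, beq_iff_eq, decide_eq_true_eq]
    split_ifs <;> omega

theorem sum_count_succ {r : List ℕ} (hr : ∀ x ∈ r, 0 < x) (n : ℕ) :
    ∑ k ∈ Finset.range n, r.count (k + 1) = r.countP (· ≤ n) := by
  induction n with
  | zero =>
    rw [Finset.sum_range_zero, eq_comm, List.countP_eq_zero]
    exact fun x hx => by simpa using (hr x hx).ne'
  | succ n ih => rw [Finset.sum_range_succ, ih, countP_le_succ]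

theorem IsRow.eq_of_count_succ_eq {u v : List ℕ} (hu : IsRow u) (hv : IsRow v)
    (h : ∀ k, u.count (k + 1) = v.count (k + 1)) : u = v := by
  refine List.Perm.eq_of_pairwise (fun _ _ _ _ => le_antisymm) hu.sorted hv.sorted
    (List.perm_iff_count.mpr fun x => ?_)
  rcases x with _ | k
  · rw [List.count_eq_zero.mpr fun h0 => (hu.pos 0 h0).false,
      List.count_eq_zero.mpr fun h0 => (hv.pos 0 h0).false]
  · exact h k

/-- The row containing `c k` copies of the letter `k + 1`, for `k < N`. -/
def rowOfCounts (N : ℕ) (c : ℕ → ℕ) : List ℕ :=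
  (List.range N).flatMap fun k => List.replicate (c k) (k + 1)

theorem rowOfCounts_succ (N : ℕ) (c : ℕ → ℕ) :
    rowOfCounts (N + 1) c = rowOfCounts N c ++ List.replicate (c N) (N + 1) := by
  simp [rowOfCounts, List.range_succ]

theorem bounds_of_mem_rowOfCounts {N : ℕ} {c : ℕ → ℕ} {x : ℕ} (hx : x ∈ rowOfCounts N c) :
    0 < x ∧ x ≤ N := by
  simp only [rowOfCounts, List.mem_flatMap, List.mem_range, List.mem_replicate] at hx
  omega

theorem isRow_rowOfCounts (N : ℕ) (c : ℕ → ℕ) : IsRow (rowOfCounts N c) := by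
  refine ⟨?_, fun x hx => (bounds_of_mem_rowOfCounts hx).1⟩
  induction N with
  | zero => exact List.Pairwise.nil
  | succ N ih =>
    rw [rowOfCounts_succ, List.pairwise_append]
    refine ⟨ih, List.pairwise_replicate.mpr (Or.inr le_rfl), fun x hx y hy => ?_⟩
    rw [(List.mem_replicate.mp hy).2]
    exact (bounds_of_mem_rowOfCounts hx).2.trans N.le_succ

theorem count_succ_rowOfCounts (N : ℕ) (c : ℕ → ℕ) (k : ℕ) :
    (rowOfCounts N c).count (k + 1) = if k < N then c k else 0 := by
  induction N with
  | zero => rfl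
  | succ N ih =>
    rw [rowOfCounts_succ, List.count_append, ih, List.count_replicate]
    grind

end Rows

section RowChains

/-- The number of letters `k + 1` in the rows of `R` preceding row `i`. -/
def rowChain (R : List (List ℕ)) (i k : ℕ) : ℤ := (R.take i).flatten.count (k + 1)

theorem flatten_take_succ {α : Type*} (R : List (List α)) (i : ℕ) :
    (R.take (i + 1)).flatten = (R.take i).flatten ++ R.getD i [] := by
  rw [List.take_add_one, List.flatten_append, List.getD_eq_getElem?_getD]
  cases R[i]? <;> simp

theorem isPrefix_flatten_take_append_getD {α : Type*} (R : List (List α)) (i : ℕ) :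
    (R.take i).flatten ++ R.getD i [] <+: R.flatten :=
  flatten_take_succ R i ▸ (List.take_prefix _ _).flatten

theorem exists_take_flatten_eq {α : Type*} (R : List (List α)) (p : ℕ) :
    ∃ i q, R.flatten.take p = (R.take i).flatten ++ (R.getD i []).take q := by
  induction R generalizing p with
  | nil => exact ⟨0, 0, by simp⟩
  | cons r R ih =>
    rcases le_or_gt p r.length with hp | hp
    · exact ⟨0, p, by simp [List.take_append, Nat.sub_eq_zero_of_le hp]⟩
    · obtain ⟨i, q, h⟩ := ih (p - r.length)
      exact ⟨i + 1, q, by simp [List.take_append, h, List.take_of_length_le hp.le]⟩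

theorem count_flatten_map_reverse {α : Type*} [BEq α] (R : List (List α)) (x : α) :
    (R.map List.reverse).flatten.count x = R.flatten.count x := by
  induction R with
  | nil => rfl
  | cons r R ih => simp [List.count_append, ih]

theorem rowChain_succ (R : List (List ℕ)) (i k : ℕ) :
    rowChain R (i + 1) k = rowChain R i k + (R.getD i []).count (k + 1) := by
  rw [rowChain, rowChain, flatten_take_succ, List.count_append, Nat.cast_add]

theorem rowChain_of_length_le {R : List (List ℕ)} {i : ℕ} (hi : R.length ≤ i) (k : ℕ) :
    rowChain R i k = (R.map List.reverse).flatten.count (k + 1) := by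
  rw [rowChain, List.take_of_length_le hi, count_flatten_map_reverse]

theorem IsLatticeWord.count_succ_le_of_isPrefix {w u : List ℕ} (hw : IsLatticeWord w)
    (hu : u <+: w) (k : ℕ) : u.count (k + 2) ≤ u.count (k + 1) := by
  have hle := hw u.length (k + 1) k.succ_pos
  rwa [← List.prefix_iff_eq_take.mp hu] at hle

/-- The prefix ending just before the letters at most `k + 1` of row `i` is the one giving the
inequality between `rowChain R (i + 1) (k + 1)` and `rowChain R i k`. -/
theorem IsLatticeWord.rowChain_succ_succ_le {R : List (List ℕ)}
    (hw : IsLatticeWord (R.map List.reverse).flatten) {i : ℕ}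
    (hi : (R.getD i []).Pairwise (· ≤ ·)) (k : ℕ) :
    rowChain R (i + 1) (k + 1) ≤ rowChain R i k := by
  obtain ⟨u, v, huv, hu, hv⟩ := exists_append_of_pairwise_le hi (k + 1)
  have hpre : ((R.take i).map List.reverse).flatten ++ v.reverse <+:
      (R.map List.reverse).flatten := by
    have hrow := isPrefix_flatten_take_append_getD (R.map List.reverse) i
    rw [← List.reverse_nil, List.getD_map, huv, List.reverse_append, ← List.append_assoc,
      ← List.map_take] at hrow
    exact (List.prefix_append _ _).trans hrow
  have hle := hw.count_succ_le_of_isPrefix hpre k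
  have hvk : v.count (k + 1) = 0 := List.count_eq_zero.mpr fun hx => (hv _ hx).false
  have huk : u.count (k + 2) = 0 :=
    List.count_eq_zero.mpr fun hx => (hu _ hx).not_gt (Nat.lt_succ_self _)
  rw [List.count_append, List.count_append, count_flatten_map_reverse, count_flatten_map_reverse,
    List.count_reverse, List.count_reverse, hvk, add_zero] at hle
  rw [rowChain_succ, huv, List.count_append, huk, zero_add, rowChain, rowChain]
  exact_mod_cast hle

theorem isLatticeWord_of_rowChain_succ_succ_le {R : List (List ℕ)}
    (h : ∀ i k, rowChain R (i + 1) (k + 1) ≤ rowChain R i k) :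
    IsLatticeWord (R.map List.reverse).flatten := by
  intro p x hx
  obtain ⟨k, rfl⟩ : ∃ k, x = k + 1 := Nat.exists_eq_add_one.mpr hx
  obtain ⟨i, q, hiq⟩ := exists_take_flatten_eq (R.map List.reverse) p
  have hrow :
      ((R.getD i []).reverse.take q).count (k + 1 + 1) ≤ (R.getD i []).count (k + 1 + 1) :=
    ((List.take_sublist _ _).count_le _).trans_eq List.count_reverse
  have hik := h i k
  rw [rowChain_succ, rowChain, rowChain] at hik
  rw [hiq, ← List.reverse_nil, List.getD_map, ← List.map_take, List.count_append, List.count_append,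
    count_flatten_map_reverse, count_flatten_map_reverse]
  omega

theorem forall_isHorizontalStrip_rowChain_iff {R : List (List ℕ)} (hR : ∀ r ∈ R, IsRow r) :
    (∀ i, IsHorizontalStrip (rowChain R i) (rowChain R (i + 1))) ↔
      IsLatticeWord (R.map List.reverse).flatten := by
  refine ⟨fun h => isLatticeWord_of_rowChain_succ_succ_le fun i k => (h i k).2,
    fun hw i k => ⟨?_, hw.rowChain_succ_succ_le (forall_getD hR IsRow.nil i).sorted k⟩⟩
  rw [rowChain_succ]
  exact le_add_of_nonneg_right (Nat.cast_nonneg _)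

end RowChains

section Fillings

/-- The rows, from bottom to top, of two column strict tableaux of shapes `L` and `M` stacked on one
another, whose reading word is a lattice word of content `ν`. -/
structure IsFilling (L M ν : List ℕ) (R : List (List ℕ)) : Prop where
  isRow : ∀ r ∈ R, IsRow r
  lengths : R.map List.length = L ++ M
  columnStrict : ∀ i, i + 1 ≠ L.length → ColumnStrict (R.getD i []) (R.getD (i + 1) [])
  lattice : IsLatticeWord (R.map List.reverse).flatten
  content : HasContent (R.map List.reverse).flatten ν

theorem entrySeq_of_length_le {l : List ℕ} {i : ℕ} (hi : l.length ≤ i) : entrySeq l i = 0 := by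
  rw [entrySeq, List.getD_eq_default _ _ hi, Nat.cast_zero]

theorem rowGap_rowChain {R : List (List ℕ)} (hR : ∀ r ∈ R, IsRow r) (i k : ℕ) :
    rowGap (rowChain R) i k =
      ((R.getD i []).countP (· ≤ k) : ℤ) - (R.getD (i + 1) []).countP (· ≤ k + 1) := by
  rw [rowGap, ← sum_count_succ (forall_getD hR IsRow.nil i).pos,
    ← sum_count_succ (forall_getD hR IsRow.nil (i + 1)).pos]
  simp only [rowChain_succ R, add_sub_cancel_left, Nat.cast_sum]

theorem rowGap_rowChain_nonneg_iff {R : List (List ℕ)} (hR : ∀ r ∈ R, IsRow r) (i : ℕ) :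
    (∀ k, 0 ≤ rowGap (rowChain R) i k) ↔ ColumnStrict (R.getD i []) (R.getD (i + 1) []) := by
  rw [columnStrict_iff (forall_getD hR IsRow.nil i).sorted (forall_getD hR IsRow.nil (i + 1))]
  simp only [rowGap_rowChain hR, sub_nonneg, Nat.cast_le]

theorem stripSize_rowChain {R : List (List ℕ)} {N : ℕ} (hR : ∀ r ∈ R, IsRow r)
    (hN : ∀ r ∈ R, ∀ x ∈ r, x ≤ N) (i : ℕ) :
    stripSize N (rowChain R) i = (R.getD i []).length := by
  have hcount : (R.getD i []).countP (· ≤ N) = (R.getD i []).length :=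
    List.countP_eq_length.mpr (by simpa using forall_getD hN (by simp) i)
  rw [stripSize, ← hcount, ← sum_count_succ (forall_getD hR IsRow.nil i).pos]
  simp only [rowChain_succ, add_sub_cancel_left, Nat.cast_sum]

theorem HasContent.le_length {w ν : List ℕ} (h : HasContent w ν) {x : ℕ} (hx : x ∈ w) :
    x ≤ ν.length := by
  by_contra! hlt
  obtain ⟨k, rfl⟩ : ∃ k, x = k + 1 := Nat.exists_eq_add_one.mpr (Nat.zero_lt_of_lt hlt)
  have hcount := h k
  rw [List.getD_eq_default _ _ (Nat.le_of_lt_succ hlt), List.count_eq_zero] at hcount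
  exact hcount hx

theorem isStripChain_rowChain_iff {ν : List ℕ} {R : List (List ℕ)} (hR : ∀ r ∈ R, IsRow r) :
    IsStripChain ν.length R.length (entrySeq ν) (rowChain R) ↔
      IsLatticeWord (R.map List.reverse).flatten ∧ HasContent (R.map List.reverse).flatten ν := by
  rw [← forall_isHorizontalStrip_rowChain_iff hR]
  refine ⟨fun h => ⟨h.strip, fun k => ?_⟩, fun ⟨hstrip, hcontent⟩ => ⟨?_, hstrip, ?_, ?_⟩⟩
  · have hk := congrFun (h.stable _ le_rfl) k
    rw [rowChain_of_length_le le_rfl, entrySeq] at hk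
    exact_mod_cast hk
  · funext k
    simp [rowChain]
  · intro i hi
    funext k
    rw [rowChain_of_length_le hi, hcontent, entrySeq]
  · exact fun k => entrySeq_of_length_le

theorem eq_append_iff_forall_getD {α : Type*} {l L M : List α} (d : α)
    (hlen : l.length = L.length + M.length) :
    l = L ++ M ↔ (∀ i < L.length, l.getD i d = L.getD i d) ∧
      ∀ j < M.length, l.getD (L.length + j) d = M.getD j d := by
  constructor
  · rintro rfl
    exact ⟨fun i hi => List.getD_append _ _ _ _ hi, fun j _ => by
      rw [List.getD_append_right _ _ _ _ le_self_add, Nat.add_sub_cancel_left]⟩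
  · rintro ⟨hL, hM⟩
    refine List.ext_getElem (by rw [hlen, List.length_append]) fun i hi hi' => ?_
    rw [← List.getD_eq_getElem _ d hi, ← List.getD_eq_getElem _ d hi']
    rcases lt_or_ge i L.length with hiL | hiL
    · rw [hL i hiL, List.getD_append _ _ _ _ hiL]
    · obtain ⟨j, rfl⟩ := Nat.exists_eq_add_of_le hiL
      rw [hM j (by omega), List.getD_append_right _ _ _ _ hiL, Nat.add_sub_cancel_left]

theorem isFilling_iff_isLRChain {L M ν : List ℕ} {R : List (List ℕ)} (hR : ∀ r ∈ R, IsRow r)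
    (hlen : R.length = L.length + M.length) :
    IsFilling L M ν R ↔ IsLRChain ν.length L.length M.length (entrySeq L) (entrySeq M)
      (entrySeq ν) (rowChain R) := by
  have lengths_iff (hcontent : HasContent (R.map List.reverse).flatten ν) :
      R.map List.length = L ++ M ↔
        (∀ i < L.length, stripSize ν.length (rowChain R) i = entrySeq L i) ∧
          ∀ j < M.length, stripSize ν.length (rowChain R) (L.length + j) = entrySeq M j := by
    have hN : ∀ r ∈ R, ∀ x ∈ r, x ≤ ν.length := fun r hr x hx => hcontent.le_length <|
      List.mem_flatten.mpr ⟨_, List.mem_map_of_mem hr, List.mem_reverse.mpr hx⟩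
    have getD_lengths (i : ℕ) : (R.map List.length).getD i 0 = (R.getD i []).length :=
      List.getD_map R [] List.length
    simp only [eq_append_iff_forall_getD 0 ((List.length_map _).trans hlen), getD_lengths,
      stripSize_rowChain hR hN, entrySeq, Nat.cast_inj]
  constructor
  · intro h
    obtain ⟨hleft, hright⟩ := (lengths_iff h.content).mp h.lengths
    exact ⟨hlen ▸ (isStripChain_rowChain_iff hR).mpr ⟨h.lattice, h.content⟩,
      fun i hi => (rowGap_rowChain_nonneg_iff hR i).mpr (h.columnStrict i hi), hleft, hright⟩
  · intro h
    obtain ⟨hlattice, hcontent⟩ := (isStripChain_rowChain_iff hR).mp (hlen ▸ h.toIsStripChain)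
    exact ⟨hR, (lengths_iff hcontent).mpr ⟨h.stripSize_left, h.stripSize_right⟩,
      fun i hi => (rowGap_rowChain_nonneg_iff hR i).mp (h.rowGap_nonneg i hi), hlattice, hcontent⟩

/-- The `r` rows recording the strips of a chain: row `i` contains the letter `k + 1` as often as
there are cells in row `k` of the `i`-th strip. -/
def rowsOfChain (N r : ℕ) (K : ℕ → ℕ → ℤ) : List (List ℕ) :=
  (List.range r).map fun i => rowOfCounts N fun k => (K (i + 1) k - K i k).toNat

theorem length_rowsOfChain (N r : ℕ) (K : ℕ → ℕ → ℤ) : (rowsOfChain N r K).length = r := by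
  rw [rowsOfChain, List.length_map, List.length_range]

theorem isRow_of_mem_rowsOfChain {N r : ℕ} {K : ℕ → ℕ → ℤ} {u : List ℕ}
    (hu : u ∈ rowsOfChain N r K) : IsRow u := by
  obtain ⟨i, -, rfl⟩ := List.mem_map.mp hu
  exact isRow_rowOfCounts _ _

theorem IsStripChain.rowChain_rowsOfChain {N r : ℕ} {ν : ℕ → ℤ} {K : ℕ → ℕ → ℤ}
    (h : IsStripChain N r ν K) : rowChain (rowsOfChain N r K) = K := by
  funext i k
  induction i with
  | zero => simp [rowChain, h.zero]
  | succ i ih =>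
    rw [rowChain_succ, ih]
    rcases lt_or_ge i r with hi | hi
    · have hrow : (rowsOfChain N r K).getD i [] =
          rowOfCounts N fun k => (K (i + 1) k - K i k).toNat := by
        simp [rowsOfChain, List.getD_eq_getElem?_getD, hi]
      rw [hrow, count_succ_rowOfCounts]
      split_ifs with hk
      · rw [Int.toNat_of_nonneg (sub_nonneg.mpr (h.strip i k).1), add_sub_cancel]
      · rw [h.eq_zero _ (not_lt.mp hk), h.eq_zero _ (not_lt.mp hk), Nat.cast_zero, add_zero]
    · rw [List.getD_eq_default _ _ ((length_rowsOfChain N r K).trans_le hi), h.stable i hi,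
        h.stable (i + 1) (hi.trans i.le_succ), List.count_nil, Nat.cast_zero, add_zero]

theorem eq_of_rowChain_eq {R R' : List (List ℕ)} (hlen : R.length = R'.length)
    (hR : ∀ r ∈ R, IsRow r) (hR' : ∀ r ∈ R', IsRow r) (h : rowChain R = rowChain R') : R = R' := by
  refine List.ext_getElem hlen fun i hi hi' => ?_
  refine (hR _ (List.getElem_mem hi)).eq_of_count_succ_eq (hR' _ (List.getElem_mem hi')) fun k => ?_
  have hsucc := rowChain_succ R i k
  rw [h, rowChain_succ, add_right_inj, List.getD_eq_getElem _ _ hi, List.getD_eq_getElem _ _ hi']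
    at hsucc
  exact_mod_cast hsucc.symm

theorem IsFilling.length_eq {L M ν : List ℕ} {R : List (List ℕ)} (h : IsFilling L M ν R) :
    R.length = L.length + M.length := by
  rw [← List.length_map List.length, h.lengths, List.length_append]

theorem card_isFilling (L M ν : List ℕ) :
    Nat.card {R // IsFilling L M ν R} = Nat.card {K // IsLRChain ν.length L.length M.length
      (entrySeq L) (entrySeq M) (entrySeq ν) K} := by
  refine Nat.card_congr (Equiv.ofBijective
    (fun R => ⟨rowChain R, (isFilling_iff_isLRChain R.2.isRow R.2.length_eq).mp R.2⟩) ⟨?_, ?_⟩)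
  · intro R R' heq
    exact Subtype.ext (eq_of_rowChain_eq (R.2.length_eq.trans R'.2.length_eq.symm) R.2.isRow
      R'.2.isRow (congrArg Subtype.val heq))
  · rintro ⟨K, hK⟩
    have hchain := hK.rowChain_rowsOfChain
    refine ⟨⟨rowsOfChain ν.length (L.length + M.length) K, ?_⟩, Subtype.ext hchain⟩
    rwa [isFilling_iff_isLRChain (fun r => isRow_of_mem_rowsOfChain) (length_rowsOfChain _ _ _),
      hchain]

end Fillings

section Tableaux

namespace SkewTab

theorem innFn_eq_zero {T : SkewTab} {n : ℕ} (h : T.inn = List.replicate n 0) (i : ℕ) :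
    T.innFn i = 0 := by
  rw [innFn, h]
  exact forall_getD (P := (· = 0)) (fun _ => List.eq_of_mem_replicate) rfl i

theorem isCST_and_shape_iff {T : SkewTab} {l : List ℕ} (hl : ∀ x ∈ l, 0 < x) :
    T.IsCST ∧ T.shape = l ↔
      T.inn = List.replicate T.rows.length 0 ∧ T.rows.map List.length = l ∧
        (∀ r ∈ T.rows, IsRow r) ∧
          ∀ i, ColumnStrict (T.rows.getD i []) (T.rows.getD (i + 1) []) := by
  constructor
  · rintro ⟨⟨⟨-, -, hout, -, hsorted, hpos, hcolumn⟩, hinn⟩, hshape⟩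
    refine ⟨hinn, hshape, fun r hr => ⟨List.isChain_iff_pairwise.mp (hsorted r hr), hpos r hr⟩,
      fun i => ⟨?_, fun j hj => ?_⟩⟩
    · simpa [outFn, innFn_eq_zero hinn] using hout i
    · simpa [entry, innFn_eq_zero hinn] using hcolumn i j (by simp [innFn_eq_zero hinn])
        (by simpa [outFn, innFn_eq_zero hinn] using hj) (by simp [innFn_eq_zero hinn])
  · rintro ⟨hinn, hshape, hrow, hcolumn⟩
    refine ⟨⟨⟨by simp [hinn], fun i => by simp [innFn_eq_zero hinn], fun i => ?_, fun hne => ?_,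
      fun r hr => List.isChain_iff_pairwise.mpr (hrow r hr).sorted, fun r hr => (hrow r hr).pos,
      fun i j _ hj _ => ?_⟩, hinn⟩, hshape⟩
    · simpa [outFn, innFn_eq_zero hinn] using (hcolumn i).1
    · have hlast : T.rows.length - 1 < T.rows.length :=
        Nat.sub_lt (List.length_pos_iff.mpr hne) one_pos
      rw [outFn, innFn_eq_zero hinn, zero_add, List.getD_eq_getElem _ _ hlast]
      exact (hl _ (hshape ▸ List.mem_map_of_mem (List.getElem_mem hlast))).ne'
    · simpa [entry, innFn_eq_zero hinn] using
        (hcolumn i).2 j (by simpa [outFn, innFn_eq_zero hinn] using hj)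

end SkewTab

theorem forall_ne_getD_append_iff {α : Type*} {P : α → α → Prop} {d : α} (hd : ∀ x, P x d)
    (S T : List α) :
    (∀ i, i + 1 ≠ S.length → P ((S ++ T).getD i d) ((S ++ T).getD (i + 1) d)) ↔
      (∀ i, P (S.getD i d) (S.getD (i + 1) d)) ∧ ∀ i, P (T.getD i d) (T.getD (i + 1) d) := by
  have getD_left {i : ℕ} (hi : i + 1 < S.length) :
      (S ++ T).getD i d = S.getD i d ∧ (S ++ T).getD (i + 1) d = S.getD (i + 1) d :=
    ⟨List.getD_append _ _ _ _ (Nat.lt_of_succ_lt hi), List.getD_append _ _ _ _ hi⟩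
  have getD_right (i : ℕ) : (S ++ T).getD (S.length + i) d = T.getD i d := by
    rw [List.getD_append_right _ _ _ _ le_self_add, Nat.add_sub_cancel_left]
  refine ⟨fun h => ⟨fun i => ?_, fun i => ?_⟩, fun ⟨hS, hT⟩ i hne => ?_⟩
  · rcases lt_or_ge (i + 1) S.length with hi | hi
    · simpa only [getD_left hi] using h i hi.ne
    · rw [List.getD_eq_default _ _ hi]
      exact hd _
  · simpa only [add_assoc, getD_right] using h (S.length + i) (by omega)
  · rcases hne.lt_or_gt with hi | hi
    · simpa only [getD_left hi] using hS i
    · obtain ⟨j, rfl⟩ := Nat.exists_eq_add_of_le (Nat.le_of_lt_succ hi)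
      simpa only [add_assoc, getD_right] using hT j

/-- Pairs of column strict tableaux of shapes `L` and `M` whose concatenated reading word is a
lattice word of content `ν`. -/
abbrev IsLRPair (L M ν : List ℕ) (ST : SkewTab × SkewTab) : Prop :=
  ST.1.IsCST ∧ ST.2.IsCST ∧ ST.1.shape = L ∧ ST.2.shape = M ∧
    IsLatticeWord (ST.1.read ++ ST.2.read) ∧ HasContent (ST.1.read ++ ST.2.read) ν

theorem isLRPair_iff {L M ν : List ℕ} (hL : ∀ x ∈ L, 0 < x) (hM : ∀ x ∈ M, 0 < x)
    (S T : SkewTab) :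
    IsLRPair L M ν (S, T) ↔
      S.inn = List.replicate L.length 0 ∧ T.inn = List.replicate M.length 0 ∧
        S.rows.length = L.length ∧ IsFilling L M ν (S.rows ++ T.rows) := by
  have read_append : S.read ++ T.read = ((S.rows ++ T.rows).map List.reverse).flatten := by
    rw [List.map_append, List.flatten_append, SkewTab.read, SkewTab.read]
  have columnStrict_iff (hlen : S.rows.length = L.length) :=
    hlen ▸ forall_ne_getD_append_iff (P := ColumnStrict) (d := []) (fun _ => ⟨by simp, by simp⟩)
      S.rows T.rows
  constructor
  · rintro ⟨hS, hT, hSshape, hTshape, hlattice, hcontent⟩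
    obtain ⟨hSinn, hSlen, hSrow, hScol⟩ := (SkewTab.isCST_and_shape_iff hL).mp ⟨hS, hSshape⟩
    obtain ⟨hTinn, hTlen, hTrow, hTcol⟩ := (SkewTab.isCST_and_shape_iff hM).mp ⟨hT, hTshape⟩
    have hlen : S.rows.length = L.length := by rw [← hSlen, List.length_map]
    have hlen' : T.rows.length = M.length := by rw [← hTlen, List.length_map]
    exact ⟨hlen ▸ hSinn, hlen' ▸ hTinn, hlen, List.forall_mem_append.mpr ⟨hSrow, hTrow⟩,
      by rw [List.map_append, hSlen, hTlen], (columnStrict_iff hlen).mpr ⟨hScol, hTcol⟩,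
      read_append ▸ hlattice, read_append ▸ hcontent⟩
  · rintro ⟨hSinn, hTinn, hlen, h⟩
    obtain ⟨hSrow, hTrow⟩ := List.forall_mem_append.mp h.isRow
    obtain ⟨hScol, hTcol⟩ := (columnStrict_iff hlen).mp h.columnStrict
    obtain ⟨hSlen, hTlen⟩ := List.append_inj (List.map_append.symm.trans h.lengths)
      ((List.length_map _).trans hlen)
    have hlen' : T.rows.length = M.length := by rw [← hTlen, List.length_map]
    obtain ⟨hS, hSshape⟩ :=
      (SkewTab.isCST_and_shape_iff hL).mpr ⟨hlen ▸ hSinn, hSlen, hSrow, hScol⟩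
    obtain ⟨hT, hTshape⟩ :=
      (SkewTab.isCST_and_shape_iff hM).mpr ⟨hlen' ▸ hTinn, hTlen, hTrow, hTcol⟩
    exact ⟨hS, hT, hSshape, hTshape, read_append ▸ h.lattice, read_append ▸ h.content⟩

theorem card_isLRPair {L M : List ℕ} (ν : List ℕ) (hL : ∀ x ∈ L, 0 < x) (hM : ∀ x ∈ M, 0 < x) :
    Nat.card {ST // IsLRPair L M ν ST} = Nat.card {R // IsFilling L M ν R} := by
  refine Nat.card_congr (Equiv.ofBijective
    (fun ST => ⟨ST.1.1.rows ++ ST.1.2.rows, ((isLRPair_iff hL hM _ _).mp ST.2).2.2.2⟩) ⟨?_, ?_⟩)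
  · rintro ⟨⟨S, T⟩, h⟩ ⟨⟨S', T'⟩, h'⟩ heq
    obtain ⟨hSinn, hTinn, hlen, -⟩ := (isLRPair_iff hL hM _ _).mp h
    obtain ⟨hSinn', hTinn', hlen', -⟩ := (isLRPair_iff hL hM _ _).mp h'
    obtain ⟨hS, hT⟩ := List.append_inj (congrArg Subtype.val heq) (hlen.trans hlen'.symm)
    have ext_rows {U U' : SkewTab} (hinn : U.inn = U'.inn) (hrows : U.rows = U'.rows) :
        U = U' := by
      cases U; cases U'; simp_all
    exact Subtype.ext (Prod.ext (ext_rows (hSinn.trans hSinn'.symm) hS)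
      (ext_rows (hTinn.trans hTinn'.symm) hT))
  · rintro ⟨R, hR⟩
    have hrows := List.take_append_drop L.length R
    refine ⟨⟨(⟨List.replicate L.length 0, R.take L.length⟩,
      ⟨List.replicate M.length 0, R.drop L.length⟩), ?_⟩, Subtype.ext hrows⟩
    exact (isLRPair_iff hL hM _ _).mpr
      ⟨rfl, rfl, List.length_take_of_le (le_self_add.trans_eq hR.length_eq.symm), hrows.symm ▸ hR⟩

end Tableaux

theorem antitone_entrySeq {l : List ℕ} (hl : l.SortedGE) : Antitone (entrySeq l) := by
  refine antitone_nat_of_succ_le fun i => Nat.cast_le.mpr ?_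
  rcases lt_or_ge (i + 1) l.length with hi | hi
  · rw [List.getD_eq_getElem _ _ hi, List.getD_eq_getElem _ _ (Nat.lt_of_succ_lt hi)]
    exact hl.getElem_ge_getElem_of_le i.le_succ
  · rw [List.getD_eq_default _ _ hi]
    exact Nat.zero_le _

theorem sortedGE_partList {n : ℕ} (lam : n.Partition) : (partList lam).SortedGE := by
  rw [partList, List.sortedGE_reverse]
  exact (Multiset.pairwise_sort _ _).sortedLE

theorem pos_of_mem_partList {n : ℕ} {lam : n.Partition} {x : ℕ} (hx : x ∈ partList lam) : 0 < x :=
  lam.parts_pos (by simpa [partList] using hx)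

theorem lr_coefficient_pairs_general {L M ν : List ℕ} (hL : L.SortedGE) (hM : M.SortedGE)
    (hν : ν.SortedGE) (hL0 : ∀ x ∈ L, 0 < x) (hM0 : ∀ x ∈ M, 0 < x) :
    hall (schurList L * schurList M) (schurList ν) = Nat.card {ST // IsLRPair L M ν ST} := by
  rw [schurList_eq_jtDet, schurList_eq_jtDet, schurList_eq_jtDet, ← hallForm_apply,
    hallForm_jtDet_mul_jtDet_eq_card _ _ _ (antitone_entrySeq hL) (antitone_entrySeq hM)
      (antitone_entrySeq hν) fun k => entrySeq_of_length_le,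
    ← card_isFilling, ← card_isLRPair ν hL0 hM0]

/-- the Littlewood–Richardson coefficient `c^ν_{λμ} = ⟨s_λ s_μ, s_ν⟩`
counts pairs `(S,T)` of column strict tableaux of straight shapes `λ` and `μ` whose
concatenated reading word `read(S)read(T)` is lattice of content `ν`. -/
theorem lr_coefficient_pairs (p q n : ℕ) (lam : Nat.Partition p)
    (mu : Nat.Partition q) (nu : Nat.Partition n) (hpq : p + q = n) :
    hall (schur lam * schur mu) (schur nu)
      = (Nat.card {ST : SkewTab × SkewTab //
          ST.1.IsCST ∧ ST.2.IsCST ∧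
          ST.1.shape = partList lam ∧ ST.2.shape = partList mu ∧
          IsLatticeWord (ST.1.read ++ ST.2.read) ∧
          HasContent (ST.1.read ++ ST.2.read) (partList nu)} : ℚ) :=
  lr_coefficient_pairs_general (sortedGE_partList lam) (sortedGE_partList mu)
    (sortedGE_partList nu) (fun _ => pos_of_mem_partList) fun _ => pos_of_mem_partList
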